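/- Let μ, ν > 0 and let (u,b) be a smooth solution of the 2D stationary MHD system -μΔu + u·∇u + ∇π = b·∇b, -νΔb + u·∇b = b·∇u, div u = div b = 0 on ℝ², with finite Dirichlet energy D(u,b) = ∫_{ℝ²} (|∇u|² + |∇b|²) dx ≤ D₀ < ∞. There exists an absolute constant C* > 0 such that if ‖b‖_{L¹(ℝ²)} · D₀^{1/2} ≤ C* min{μν, μ^{1/2}ν^{3/2}}, then u and b are constant; moreover b ≡ 0. -/

import Mathlib

open MeasureTheory Real Filter

noncomputable def pd (v : ℝ × ℝ) (g : ℝ × ℝ → ℝ) : ℝ × ℝ → ℝ :=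
  fun x => fderiv ℝ g x v

noncomputable def lap (g : ℝ × ℝ → ℝ) : ℝ × ℝ → ℝ :=
  fun x => pd (1,0) (pd (1,0) g) x + pd (0,1) (pd (0,1) g) x

noncomputable def advect (v : ℝ × ℝ → ℝ × ℝ) (g : ℝ × ℝ → ℝ) : ℝ × ℝ → ℝ :=
  fun x => (v x).1 * pd (1,0) g x + (v x).2 * pd (0,1) g x

noncomputable def divg (v : ℝ × ℝ → ℝ × ℝ) : ℝ × ℝ → ℝ :=
  fun x => pd (1,0) (fun y => (v y).1) x + pd (0,1) (fun y => (v y).2) x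

noncomputable def vort (v : ℝ × ℝ → ℝ × ℝ) : ℝ × ℝ → ℝ :=
  fun x => pd (0,1) (fun y => (v y).1) x - pd (1,0) (fun y => (v y).2) x

/-- The stationary 2D MHD system with viscosity `μ` and resistivity `ν`. -/
def isMHD (μ ν : ℝ) (u b : ℝ × ℝ → ℝ × ℝ) (pr : ℝ × ℝ → ℝ) : Prop :=
  (∀ x, -(μ * lap (fun y => (u y).1) x) + advect u (fun y => (u y).1) x + pd (1,0) pr x
      = advect b (fun y => (b y).1) x) ∧
  (∀ x, -(μ * lap (fun y => (u y).2) x) + advect u (fun y => (u y).2) x + pd (0,1) pr x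
      = advect b (fun y => (b y).2) x) ∧
  (∀ x, -(ν * lap (fun y => (b y).1) x) + advect u (fun y => (b y).1) x
      = advect b (fun y => (u y).1) x) ∧
  (∀ x, -(ν * lap (fun y => (b y).2) x) + advect u (fun y => (b y).2) x
      = advect b (fun y => (u y).2) x) ∧
  (∀ x, divg u x = 0) ∧ (∀ x, divg b x = 0)

open scoped ContDiff

@[fun_prop]
theorem ContDiff.pd {f : ℝ × ℝ → ℝ} (hf : ContDiff ℝ ∞ f) (v : ℝ × ℝ) :
    ContDiff ℝ ∞ (fun x => pd v f x) := by
  unfold _root_.pd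
  exact (hf.fderiv_right (m := ∞) (by simp)).clm_apply contDiff_const

theorem pd_add {f g : ℝ × ℝ → ℝ} (hf : ContDiff ℝ ∞ f) (hg : ContDiff ℝ ∞ g)
    (v x : ℝ × ℝ) : pd v (fun y => f y + g y) x = pd v f x + pd v g x := by
  unfold pd
  rw [fderiv_fun_add (hf.differentiable (by simp) x) (hg.differentiable (by simp) x)]
  rfl

theorem pd_sub {f g : ℝ × ℝ → ℝ} (hf : ContDiff ℝ ∞ f) (hg : ContDiff ℝ ∞ g)
    (v x : ℝ × ℝ) : pd v (fun y => f y - g y) x = pd v f x - pd v g x := by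
  unfold pd
  rw [fderiv_fun_sub (hf.differentiable (by simp) x) (hg.differentiable (by simp) x)]
  rfl

theorem pd_mul {f g : ℝ × ℝ → ℝ} (hf : ContDiff ℝ ∞ f) (hg : ContDiff ℝ ∞ g)
    (v x : ℝ × ℝ) : pd v (fun y => f y * g y) x = f x * pd v g x + pd v f x * g x := by
  unfold pd
  rw [fderiv_fun_mul (hf.differentiable (by simp) x) (hg.differentiable (by simp) x)]
  simp [mul_comm]

theorem pd_const (c : ℝ) (v x : ℝ × ℝ) : pd v (fun _ => c) x = 0 := by
  simp [pd]

theorem pd_pow {f : ℝ × ℝ → ℝ} (hf : ContDiff ℝ ∞ f) (n : ℕ) (v x : ℝ × ℝ) :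
    pd v (fun y => f y ^ n) x = n * f x ^ (n - 1) * pd v f x := by
  unfold pd
  rw [fderiv_fun_pow n (hf.differentiable (by simp) x)]
  simp [mul_assoc]

theorem pd_comm {f : ℝ × ℝ → ℝ} (hf : ContDiff ℝ ∞ f) (v w x : ℝ × ℝ) :
    pd v (pd w f) x = pd w (pd v f) x := by
  have key : ∀ a b : ℝ × ℝ, pd a (pd b f) x = fderiv ℝ (fderiv ℝ f) x a b := by
    intro a b
    have hd : DifferentiableAt ℝ (fderiv ℝ f) x :=
      (hf.fderiv_right (m := ∞) (by simp)).differentiable (by simp) x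
    change fderiv ℝ (fun y => fderiv ℝ f y b) x a = _
    rw [fderiv_clm_apply hd (by fun_prop)]
    simp
  rw [key, key]
  exact (hf.contDiffAt.isSymmSndFDerivAt
    (by simpa using WithTop.coe_le_coe.2 (le_top : (2 : ℕ∞) ≤ ⊤))).eq v w

theorem HasCompactSupport.of_eq_zero {E F : Type*} [Zero E] [Zero F] {f : ℝ × ℝ → E}
    {g : ℝ × ℝ → F} (hf : HasCompactSupport f) (h : ∀ x, f x = 0 → g x = 0) :
    HasCompactSupport g :=
  hf.mono fun x hx => mt (h x) hx

theorem HasCompactSupport.pd {f : ℝ × ℝ → ℝ} (hf : HasCompactSupport f) (v : ℝ × ℝ) :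
    HasCompactSupport (fun x => pd v f x) :=
  hf.fderiv_apply (𝕜 := ℝ) v

/-- The integral of a partial derivative of a compactly supported function vanishes. -/
theorem integral_pd_eq_zero {f : ℝ × ℝ → ℝ} (hf : ContDiff ℝ ∞ f) (hc : HasCompactSupport f)
    (v : ℝ × ℝ) : ∫ x, pd v f x = 0 := by
  have hi : Integrable (fun x => pd v f x) :=
    (hf.pd v).continuous.integrable_of_hasCompactSupport (hc.pd v)
  have h := integral_mul_fderiv_eq_neg_fderiv_mul_of_integrable (μ := volume)
    (f := fun _ : ℝ × ℝ => (1 : ℝ)) (g := f) (v := v) (by simp)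
    (by simpa [pd] using hi)
    (by simpa using hf.continuous.integrable_of_hasCompactSupport hc)
    (fun x _ => by fun_prop) (fun x _ => hf.differentiable (by simp) x)
  simpa [pd] using h

/-- Cauchy–Schwarz for real functions. -/
theorem sq_integral_mul_le {f g : ℝ × ℝ → ℝ} (hf : Continuous f) (hg : Continuous g)
    (hf2 : Integrable (fun x => f x ^ 2)) (hg2 : Integrable (fun x => g x ^ 2)) :
    Integrable (fun x => f x * g x) ∧
      (∫ x, f x * g x) ^ 2 ≤ (∫ x, f x ^ 2) * ∫ x, g x ^ 2 := by
  have hi : Integrable (fun x => f x * g x) := by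
    refine (hf2.add hg2).mono' (hf.mul hg).aestronglyMeasurable (ae_of_all _ fun x => ?_)
    simp only [Pi.add_apply, Real.norm_eq_abs]
    exact abs_le.2 ⟨by nlinarith [sq_nonneg (f x + g x), sq_nonneg (f x), sq_nonneg (g x)],
      by nlinarith [sq_nonneg (f x - g x), sq_nonneg (f x), sq_nonneg (g x)]⟩
  refine ⟨hi, ?_⟩
  have h : ∀ t : ℝ, 0 ≤ (∫ x, f x ^ 2) * (t * t) + (2 * ∫ x, f x * g x) * t + ∫ x, g x ^ 2 := by
    intro t
    have h1 : ∫ x, (t * f x + g x) ^ 2 =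
        (∫ x, f x ^ 2) * (t * t) + (2 * ∫ x, f x * g x) * t + ∫ x, g x ^ 2 := by
      have : ∀ x, (t * f x + g x) ^ 2 = f x ^ 2 * (t * t) + (f x * g x) * (2 * t) + g x ^ 2 :=
        fun x => by ring
      simp_rw [this]
      rw [integral_add (f := fun x => f x ^ 2 * (t * t) + (f x * g x) * (2 * t))
          ((hf2.mul_const _).add (hi.mul_const _)) hg2,
        integral_add (hf2.mul_const _) (hi.mul_const _), integral_mul_const, integral_mul_const]
      ring
    rw [← h1]
    exact integral_nonneg fun x => sq_nonneg _
  have := discrim_le_zero h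
  unfold discrim at this
  nlinarith

theorem norm_fderiv_sq_le (f : ℝ × ℝ → ℝ) (x : ℝ × ℝ) :
    ‖fderiv ℝ f x‖ ^ 2 ≤ 2 * (pd (1, 0) f x ^ 2 + pd (0, 1) f x ^ 2) := by
  have h : ‖fderiv ℝ f x‖ ≤ |pd (1, 0) f x| + |pd (0, 1) f x| := by
    refine ContinuousLinearMap.opNorm_le_bound _ (by positivity) fun v => ?_
    have hv : v = v.1 • ((1 : ℝ), (0 : ℝ)) + v.2 • ((0 : ℝ), (1 : ℝ)) := by ext <;> simp
    have h1 : fderiv ℝ f x v = v.1 * pd (1, 0) f x + v.2 * pd (0, 1) f x := by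
      conv_lhs => rw [hv]
      rw [map_add, map_smul, map_smul]; rfl
    rw [h1, Real.norm_eq_abs]
    have h2 : |v.1| ≤ ‖v‖ := norm_fst_le v
    have h3 : |v.2| ≤ ‖v‖ := norm_snd_le v
    calc |v.1 * pd (1, 0) f x + v.2 * pd (0, 1) f x|
        ≤ |v.1| * |pd (1, 0) f x| + |v.2| * |pd (0, 1) f x| := by
          rw [← abs_mul, ← abs_mul]; exact abs_add_le _ _
      _ ≤ ‖v‖ * |pd (1, 0) f x| + ‖v‖ * |pd (0, 1) f x| := by gcongr
      _ = _ := by ring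
  have h0 := norm_nonneg (fderiv ℝ f x)
  nlinarith [sq_abs (pd (1, 0) f x), sq_abs (pd (0, 1) f x),
    sq_nonneg (|pd (1, 0) f x| - |pd (0, 1) f x|)]

/-- Gagliardo–Nirenberg–Sobolev in the plane, squared form. -/
theorem exists_integral_sq_le_integral_fderiv_sq :
    ∃ C : ℝ, 0 < C ∧ ∀ f : ℝ × ℝ → ℝ, ContDiff ℝ ∞ f → HasCompactSupport f →
      ∫ x, f x ^ 2 ≤ C * (∫ x, ‖fderiv ℝ f x‖) ^ 2 := by
  refine ⟨lintegralPowLePowLIntegralFDerivConst (volume : Measure (ℝ × ℝ)) 2 + 1,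
    by positivity, fun f hf hc => ?_⟩
  have hp : Real.HolderConjugate (Module.finrank ℝ (ℝ × ℝ)) 2 := by
    rw [Module.finrank_prod, Module.finrank_self, Real.holderConjugate_iff]; norm_num
  have h := lintegral_pow_le_pow_lintegral_fderiv (volume : Measure (ℝ × ℝ))
    (hf.of_le (by simp)) hc hp
  have hcd : Continuous (fderiv ℝ f) := hf.continuous_fderiv (by simp)
  have hi : Integrable (fun x => ‖fderiv ℝ f x‖) :=
    hcd.norm.integrable_of_hasCompactSupport (hc.fderiv (𝕜 := ℝ)).norm
  have e1 : ∫⁻ x, ‖f x‖ₑ ^ (2 : ℝ) = ENNReal.ofReal (∫ x, f x ^ 2) := by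
    rw [ofReal_integral_eq_lintegral_ofReal]
    · refine lintegral_congr fun x => ?_
      rw [Real.enorm_eq_ofReal_abs, ENNReal.ofReal_rpow_of_nonneg (abs_nonneg _) (by norm_num)]
      norm_num
    · exact (hf.continuous.pow 2).integrable_of_hasCompactSupport
        (hc.of_eq_zero fun x hx => by simp [hx])
    · exact ae_of_all _ fun x => sq_nonneg _
  have e2 : ∫⁻ x, ‖fderiv ℝ f x‖ₑ = ENNReal.ofReal (∫ x, ‖fderiv ℝ f x‖) := by
    rw [ofReal_integral_eq_lintegral_ofReal hi (ae_of_all _ fun x => norm_nonneg _)]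
    simp
  have hn : 0 ≤ ∫ x, ‖fderiv ℝ f x‖ := integral_nonneg fun x => norm_nonneg _
  rw [e1, e2, ENNReal.ofReal_rpow_of_nonneg hn (by norm_num), ← ENNReal.ofReal_coe_nnreal,
    ← ENNReal.ofReal_mul (by positivity), ENNReal.ofReal_le_ofReal_iff (by positivity)] at h
  norm_num at h
  nlinarith [sq_nonneg (∫ x, ‖fderiv ℝ f x‖)]

/-- Ladyzhenskaya's inequality for compactly supported functions. -/
theorem exists_ladyzhenskaya_compact :
    ∃ C : ℝ, 0 < C ∧ ∀ f : ℝ × ℝ → ℝ, ContDiff ℝ ∞ f → HasCompactSupport f →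
      ∫ x, f x ^ 4 ≤ C * (∫ x, f x ^ 2) * ∫ x, (pd (1, 0) f x ^ 2 + pd (0, 1) f x ^ 2) := by
  obtain ⟨C, hC, h⟩ := exists_integral_sq_le_integral_fderiv_sq
  refine ⟨8 * C, by positivity, fun f hf hc => ?_⟩
  have hcd : Continuous (fderiv ℝ f) := hf.continuous_fderiv (by simp)
  have hpc : ∀ n : ℕ, n ≠ 0 → HasCompactSupport (fun x => f x ^ n) := fun n hn =>
    hc.of_eq_zero fun x hx => by simp [hx, hn]
  have h1 := h (fun x => f x ^ 2) (hf.pow 2) (hpc 2 (by simp))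
  have e : ∀ x, ‖fderiv ℝ (fun y => f y ^ 2) x‖ = 2 * (|f x| * ‖fderiv ℝ f x‖) := by
    intro x
    rw [fderiv_fun_pow 2 (hf.differentiable (by simp) x), norm_smul]
    simp [mul_assoc]
  have hd2 : Integrable (fun x => ‖fderiv ℝ f x‖ ^ 2) :=
    (hcd.norm.pow 2).integrable_of_hasCompactSupport
      ((hc.fderiv (𝕜 := ℝ)).of_eq_zero fun x hx => by simp [hx])
  have hcs := (sq_integral_mul_le hf.continuous.abs hcd.norm
    (by simpa only [sq_abs] using
      (hf.pow 2).continuous.integrable_of_hasCompactSupport (hpc 2 (by simp)))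
    hd2).2
  have hG : ∫ x, ‖fderiv ℝ f x‖ ^ 2 ≤ 2 * ∫ x, (pd (1, 0) f x ^ 2 + pd (0, 1) f x ^ 2) := by
    rw [← integral_const_mul]
    refine integral_mono hd2 ?_ (norm_fderiv_sq_le f)
    refine Continuous.integrable_of_hasCompactSupport ?_ ?_
    · have := (hf.pd (1, 0)).continuous
      have := (hf.pd (0, 1)).continuous
      fun_prop
    · refine (hc.fderiv (𝕜 := ℝ)).of_eq_zero fun x hx => ?_
      simp [pd, hx]
  simp_rw [e] at h1
  rw [integral_const_mul] at h1
  simp only [sq_abs] at hcs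
  have hn : 0 ≤ ∫ x, f x ^ 2 := integral_nonneg fun x => sq_nonneg _
  calc ∫ x, f x ^ 4 = ∫ x, (f x ^ 2) ^ 2 := by congr 1; ext x; ring
    _ ≤ C * (2 * ∫ x, |f x| * ‖fderiv ℝ f x‖) ^ 2 := h1
    _ = 4 * C * (∫ x, |f x| * ‖fderiv ℝ f x‖) ^ 2 := by ring
    _ ≤ 4 * C * ((∫ x, f x ^ 2) * (2 * ∫ x, (pd (1, 0) f x ^ 2 + pd (0, 1) f x ^ 2))) := by
      gcongr
      exact hcs.trans (by gcongr)
    _ = _ := by ring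

/-- A smooth radial cutoff, equal to `1` for `|x| ≤ R` and to `0` for `|x| ≥ √2 R`. -/
noncomputable def cutoff (R : ℝ) (x : ℝ × ℝ) : ℝ :=
  smoothTransition (2 - (x.1 ^ 2 + x.2 ^ 2) / R ^ 2)

theorem deriv_smoothTransition_eq_zero {t : ℝ} (ht : t < 0 ∨ 1 < t) :
    deriv smoothTransition t = 0 := by
  rcases ht with ht | ht
  · have : smoothTransition =ᶠ[nhds t] fun _ => 0 := by
      filter_upwards [Iio_mem_nhds ht] with s hs
      exact smoothTransition.zero_of_nonpos (le_of_lt hs)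
    rw [this.deriv_eq]; simp
  · have : smoothTransition =ᶠ[nhds t] fun _ => 1 := by
      filter_upwards [Ioi_mem_nhds ht] with s hs
      exact smoothTransition.one_of_one_le (le_of_lt hs)
    rw [this.deriv_eq]; simp

theorem exists_abs_deriv_smoothTransition_le :
    ∃ K : ℝ, 0 < K ∧ ∀ t, |deriv smoothTransition t| ≤ K := by
  have hc : Continuous (deriv smoothTransition) :=
    (smoothTransition.contDiff (n := 1)).continuous_deriv (by simp)
  obtain ⟨K, hK⟩ := (isCompact_Icc (a := (0 : ℝ)) (b := 1)).exists_bound_of_continuousOn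
    hc.continuousOn
  refine ⟨|K| + 1, by positivity, fun t => ?_⟩
  by_cases ht : t ∈ Set.Icc (0 : ℝ) 1
  · exact (hK t ht).trans (by linarith [le_abs_self K])
  · rw [deriv_smoothTransition_eq_zero]
    · simp; positivity
    · by_contra! h
      exact ht ⟨h.1, h.2⟩

@[fun_prop]
theorem contDiff_cutoff (R : ℝ) : ContDiff ℝ ∞ (fun x => cutoff R x) := by
  unfold cutoff
  exact smoothTransition.contDiff.comp (by fun_prop)

theorem cutoff_nonneg (R : ℝ) (x : ℝ × ℝ) : 0 ≤ cutoff R x := smoothTransition.nonneg _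

theorem cutoff_le_one (R : ℝ) (x : ℝ × ℝ) : cutoff R x ≤ 1 := smoothTransition.le_one _

theorem cutoff_eq_one {R : ℝ} (hR : 0 < R) {x : ℝ × ℝ} (h : x.1 ^ 2 + x.2 ^ 2 ≤ R ^ 2) :
    cutoff R x = 1 := by
  refine smoothTransition.one_of_one_le ?_
  have : (x.1 ^ 2 + x.2 ^ 2) / R ^ 2 ≤ 1 := (div_le_one (by positivity)).2 h
  linarith

theorem cutoff_eq_zero {R : ℝ} (hR : 0 < R) {x : ℝ × ℝ} (h : 2 * R ^ 2 < x.1 ^ 2 + x.2 ^ 2) :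
    cutoff R x = 0 := by
  refine smoothTransition.zero_of_nonpos ?_
  have : 2 ≤ (x.1 ^ 2 + x.2 ^ 2) / R ^ 2 := (le_div_iff₀ (by positivity)).2 h.le
  linarith

theorem hasCompactSupport_cutoff {R : ℝ} (hR : 0 < R) : HasCompactSupport (cutoff R) := by
  refine HasCompactSupport.intro (isCompact_closedBall (0 : ℝ × ℝ) (2 * R)) fun x hx => ?_
  refine cutoff_eq_zero hR ?_
  have h : 2 * R < ‖x‖ := by simpa using hx
  rw [Prod.norm_def, lt_max_iff, Real.norm_eq_abs, Real.norm_eq_abs] at h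
  rcases h with h | h
  · nlinarith [sq_abs x.1, sq_nonneg x.2]
  · nlinarith [sq_abs x.2, sq_nonneg x.1]

theorem pd_cutoff (R : ℝ) (v x : ℝ × ℝ) :
    pd v (cutoff R) x = deriv smoothTransition (2 - (x.1 ^ 2 + x.2 ^ 2) / R ^ 2) *
      (-(2 * (x.1 * v.1 + x.2 * v.2) / R ^ 2)) := by
  have h1 : HasDerivAt smoothTransition
      (deriv smoothTransition (2 - (x.1 ^ 2 + x.2 ^ 2) / R ^ 2))
      (2 - (x.1 ^ 2 + x.2 ^ 2) / R ^ 2) :=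
    ((smoothTransition.contDiff (n := 1)).differentiable (by simp) _).hasDerivAt
  have hq : HasFDerivAt (fun y : ℝ × ℝ => 2 - (y.1 ^ 2 + y.2 ^ 2) * (R ^ 2)⁻¹) _ x :=
    ((((hasFDerivAt_fst (𝕜 := ℝ) (p := x)).pow 2).add
      ((hasFDerivAt_snd (𝕜 := ℝ) (p := x)).pow 2)).mul_const ((R ^ 2)⁻¹)).const_sub 2
  have h2 := h1.comp_hasFDerivAt x hq
  have h3 : pd v (cutoff R) x = _ := congrArg (fun L : ℝ × ℝ →L[ℝ] ℝ => L v) h2.fderiv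
  rw [h3]
  simp
  ring_nf

theorem pd_cutoff_radial_nonpos (R : ℝ) (x : ℝ × ℝ) :
    x.1 * pd (1, 0) (cutoff R) x + x.2 * pd (0, 1) (cutoff R) x ≤ 0 := by
  rw [pd_cutoff, pd_cutoff]
  have h : 0 ≤ deriv smoothTransition (2 - (x.1 ^ 2 + x.2 ^ 2) / R ^ 2) :=
    smoothTransition.monotone.deriv_nonneg
  have : 0 ≤ deriv smoothTransition (2 - (x.1 ^ 2 + x.2 ^ 2) / R ^ 2) *
      ((x.1 ^ 2 + x.2 ^ 2) * 2 / R ^ 2) := by positivity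
  simp only [mul_one, mul_zero, add_zero, zero_add]
  linear_combination this

theorem pd_cutoff_eq_zero {R : ℝ} (hR : 0 < R) (v : ℝ × ℝ) {x : ℝ × ℝ}
    (h : 2 * R ^ 2 < x.1 ^ 2 + x.2 ^ 2) : pd v (cutoff R) x = 0 := by
  rw [pd_cutoff, deriv_smoothTransition_eq_zero, zero_mul]
  left
  have : 2 < (x.1 ^ 2 + x.2 ^ 2) / R ^ 2 := (lt_div_iff₀ (by positivity)).2 h
  linarith

theorem exists_pd_cutoff_sq_le : ∃ c : ℝ, 0 < c ∧ ∀ R : ℝ, 0 < R → ∀ x,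
    pd (1, 0) (cutoff R) x ^ 2 + pd (0, 1) (cutoff R) x ^ 2 ≤ c / R ^ 2 := by
  obtain ⟨K, hK, h⟩ := exists_abs_deriv_smoothTransition_le
  refine ⟨8 * K ^ 2, by positivity, fun R hR x => ?_⟩
  by_cases hx : 2 * R ^ 2 < x.1 ^ 2 + x.2 ^ 2
  · rw [pd_cutoff_eq_zero hR _ hx, pd_cutoff_eq_zero hR _ hx]
    simp only [ne_eq, OfNat.ofNat_ne_zero, not_false_eq_true, zero_pow, add_zero]
    positivity
  · push Not at hx
    rw [pd_cutoff, pd_cutoff]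
    set d := deriv smoothTransition (2 - (x.1 ^ 2 + x.2 ^ 2) / R ^ 2) with hd
    have hd2 : d ^ 2 ≤ K ^ 2 := by
      rw [← sq_abs d]; gcongr; exact h _
    calc (d * (-(2 * (x.1 * 1 + x.2 * 0) / R ^ 2))) ^ 2 +
          (d * (-(2 * (x.1 * 0 + x.2 * 1) / R ^ 2))) ^ 2
        = d ^ 2 * (4 * (x.1 ^ 2 + x.2 ^ 2) / R ^ 4) := by ring
      _ ≤ K ^ 2 * (4 * (2 * R ^ 2) / R ^ 4) := by gcongr
      _ = 8 * K ^ 2 / R ^ 2 := by field_simp; ring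

/-- Uniform bounds on cut-off integrals of a nonnegative function give integrability. -/
theorem integrable_of_integral_cutoff_le {g : ℝ × ℝ → ℝ} (hg : Continuous g)
    (h0 : ∀ x, 0 ≤ g x) (k : ℕ) {B : ℝ → ℝ} {b : ℝ} (hB : Tendsto B atTop (nhds b))
    (h : ∀ R, 1 ≤ R → ∫ x, cutoff R x ^ k.succ * g x ≤ B R) :
    Integrable g ∧ ∫ x, g x ≤ b := by
  have hcov : AECover (volume : Measure (ℝ × ℝ)) atTop
      (fun R : ℝ => Metric.closedBall (0 : ℝ × ℝ) (R / 2)) :=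
    aecover_closedBall (tendsto_id.atTop_div_const (by norm_num))
  have hio : ∀ R : ℝ, IntegrableOn g (Metric.closedBall (0 : ℝ × ℝ) (R / 2)) := fun R =>
    hg.continuousOn.integrableOn_compact (isCompact_closedBall _ _)
  have hle : ∀ᶠ R in atTop, ∫ x in Metric.closedBall (0 : ℝ × ℝ) (R / 2), g x ≤ B R := by
    filter_upwards [eventually_ge_atTop 1] with R hR
    refine le_trans ?_ (h R hR)
    have hR0 : 0 < R := by linarith
    rw [← integral_indicator Metric.isClosed_closedBall.measurableSet]
    refine integral_mono ((integrable_indicator_iff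
      Metric.isClosed_closedBall.measurableSet).2 (hio R)) ?_ fun x => ?_
    · refine Continuous.integrable_of_hasCompactSupport
        (((contDiff_cutoff R).continuous.pow _).mul hg) ?_
      exact (hasCompactSupport_cutoff hR0).of_eq_zero fun x hx => by simp [hx]
    · by_cases hx : x ∈ Metric.closedBall (0 : ℝ × ℝ) (R / 2)
      · rw [Set.indicator_of_mem hx, cutoff_eq_one hR0, one_pow, one_mul]
        have hx' : ‖x‖ ≤ R / 2 := by simpa using hx
        have h1 : |x.1| ≤ R / 2 := (norm_fst_le x).trans hx'
        have h2 : |x.2| ≤ R / 2 := (norm_snd_le x).trans hx'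
        nlinarith [sq_abs x.1, sq_abs x.2, abs_nonneg x.1, abs_nonneg x.2]
      · rw [Set.indicator_of_notMem hx]
        exact mul_nonneg (pow_nonneg (cutoff_nonneg R x) _) (h0 x)
  have hgi : Integrable g := by
    refine hcov.integrable_of_integral_bounded_of_nonneg_ae (b + 1) hio (ae_of_all _ h0) ?_
    filter_upwards [hle, hB.eventually (Iio_mem_nhds (lt_add_one b))] with R h1 h2
    exact h1.trans (le_of_lt h2)
  exact ⟨hgi, le_of_tendsto_of_tendsto (hcov.integral_tendsto_of_countably_generated hgi)
    hB hle⟩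

/-- The squared Euclidean length of the gradient. -/
noncomputable def gradSq (f : ℝ × ℝ → ℝ) (x : ℝ × ℝ) : ℝ :=
  pd (1, 0) f x ^ 2 + pd (0, 1) f x ^ 2

/-- The squared Frobenius norm of the Hessian. -/
noncomputable def hessSq (f : ℝ × ℝ → ℝ) (x : ℝ × ℝ) : ℝ :=
  gradSq (pd (1, 0) f) x + gradSq (pd (0, 1) f) x

theorem gradSq_nonneg (f : ℝ × ℝ → ℝ) (x : ℝ × ℝ) : 0 ≤ gradSq f x := by
  unfold gradSq; positivity

theorem hessSq_nonneg (f : ℝ × ℝ → ℝ) (x : ℝ × ℝ) : 0 ≤ hessSq f x :=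
  add_nonneg (gradSq_nonneg _ _) (gradSq_nonneg _ _)

@[fun_prop]
theorem ContDiff.gradSq {f : ℝ × ℝ → ℝ} (hf : ContDiff ℝ ∞ f) :
    ContDiff ℝ ∞ (fun x => gradSq f x) := by
  unfold _root_.gradSq; fun_prop

@[fun_prop]
theorem ContDiff.hessSq {f : ℝ × ℝ → ℝ} (hf : ContDiff ℝ ∞ f) :
    ContDiff ℝ ∞ (fun x => hessSq f x) := by
  unfold _root_.hessSq
  exact (hf.pd _).gradSq.add (hf.pd _).gradSq

theorem hasCompactSupport_of_eq_zero_outside {R : ℝ} (hR : 0 < R) {F : ℝ × ℝ → ℝ}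
    (h : ∀ x : ℝ × ℝ, 2 * R ^ 2 < x.1 ^ 2 + x.2 ^ 2 → F x = 0) : HasCompactSupport F := by
  refine HasCompactSupport.intro (isCompact_closedBall (0 : ℝ × ℝ) (2 * R)) fun x hx => h x ?_
  have h : 2 * R < ‖x‖ := by simpa using hx
  rw [Prod.norm_def, lt_max_iff, Real.norm_eq_abs, Real.norm_eq_abs] at h
  rcases h with h | h
  · nlinarith [sq_abs x.1, sq_nonneg x.2]
  · nlinarith [sq_abs x.2, sq_nonneg x.1]

theorem integrable_of_eq_zero_outside {R : ℝ} (hR : 0 < R) {F : ℝ × ℝ → ℝ}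
    (hF : ContDiff ℝ ∞ F)
    (h : ∀ x : ℝ × ℝ, 2 * R ^ 2 < x.1 ^ 2 + x.2 ^ 2 → F x = 0) : Integrable F :=
  hF.continuous.integrable_of_hasCompactSupport (hasCompactSupport_of_eq_zero_outside hR h)

theorem integrable_cutoff_pow_mul {R : ℝ} (hR : 0 < R) (k : ℕ) {F : ℝ × ℝ → ℝ}
    (hF : ContDiff ℝ ∞ F) : Integrable (fun x => cutoff R x ^ (k + 1) * F x) :=
  integrable_of_eq_zero_outside hR (by fun_prop) fun x hx => by simp [cutoff_eq_zero hR hx]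

theorem integral_cutoff_pow_mul_le {R : ℝ} (hR : 0 < R) (k : ℕ) {F : ℝ × ℝ → ℝ}
    (hF : ContDiff ℝ ∞ F) (h0 : ∀ x, 0 ≤ F x) (hi : Integrable F) :
    ∫ x, cutoff R x ^ (k + 1) * F x ≤ ∫ x, F x :=
  integral_mono (integrable_cutoff_pow_mul hR k hF) hi fun x =>
    mul_le_of_le_one_left (h0 x) (pow_le_one₀ (cutoff_nonneg R x) (cutoff_le_one R x))

theorem gradSq_cutoff_pow_mul_le {f : ℝ × ℝ → ℝ} (hf : ContDiff ℝ ∞ f) (R : ℝ) (k : ℕ)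
    (x : ℝ × ℝ) :
    gradSq (fun y => cutoff R y ^ (k + 1) * f y) x ≤ 2 * (cutoff R x ^ (2 * k + 2) * gradSq f x) +
      2 * (k + 1) ^ 2 * (cutoff R x ^ (2 * k) * f x ^ 2 * gradSq (cutoff R) x) := by
  have hζ : ContDiff ℝ ∞ (cutoff R) := contDiff_cutoff R
  have h : ∀ v, pd v (fun y => cutoff R y ^ (k + 1) * f y) x =
      cutoff R x ^ (k + 1) * pd v f x + (k + 1) * cutoff R x ^ k * pd v (cutoff R) x * f x := by
    intro v
    rw [pd_mul (hζ.pow _) hf, pd_pow hζ]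
    push_cast
    simp
  have key : ∀ a b : ℝ, (a + b) ^ 2 ≤ 2 * a ^ 2 + 2 * b ^ 2 := fun a b => by
    nlinarith [sq_nonneg (a - b)]
  unfold gradSq
  rw [h, h]
  refine (add_le_add (key _ _) (key _ _)).trans (le_of_eq ?_)
  ring

/-- Ladyzhenskaya's inequality with cutoffs. -/
theorem exists_ladyzhenskaya_cutoff : ∃ C : ℝ, 0 < C ∧ ∀ (f : ℝ × ℝ → ℝ), ContDiff ℝ ∞ f →
    ∀ (R : ℝ), 0 < R → ∀ k : ℕ, ∫ x, cutoff R x ^ (4 * k + 4) * f x ^ 4 ≤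
      C * (∫ x, cutoff R x ^ (2 * k + 2) * f x ^ 2) *
        (2 * (∫ x, cutoff R x ^ (2 * k + 2) * gradSq f x) +
          2 * (k + 1) ^ 2 * ∫ x, cutoff R x ^ (2 * k) * f x ^ 2 * gradSq (cutoff R) x) := by
  obtain ⟨C, hC, h⟩ := exists_ladyzhenskaya_compact
  refine ⟨C, hC, fun f hf R hR k => ?_⟩
  have hζ : ContDiff ℝ ∞ (cutoff R) := contDiff_cutoff R
  have hs : ContDiff ℝ ∞ (fun x => cutoff R x ^ (k + 1) * f x) := by fun_prop
  have hz : ∀ x : ℝ × ℝ, 2 * R ^ 2 < x.1 ^ 2 + x.2 ^ 2 → cutoff R x ^ (k + 1) * f x = 0 :=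
    fun x hx => by simp [cutoff_eq_zero hR hx]
  have h1 := h _ hs (hasCompactSupport_of_eq_zero_outside hR hz)
  have e4 : ∀ x, (cutoff R x ^ (k + 1) * f x) ^ 4 = cutoff R x ^ (4 * k + 4) * f x ^ 4 :=
    fun x => by ring
  have e2 : ∀ x, (cutoff R x ^ (k + 1) * f x) ^ 2 = cutoff R x ^ (2 * k + 2) * f x ^ 2 :=
    fun x => by ring
  simp_rw [e4, e2] at h1
  refine h1.trans ?_
  have hi1 := integrable_cutoff_pow_mul hR (2 * k + 1) hf.gradSq
  have hi2 : Integrable (fun x => cutoff R x ^ (2 * k) * f x ^ 2 * gradSq (cutoff R) x) := by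
    refine integrable_of_eq_zero_outside hR (by fun_prop) fun x hx => ?_
    simp [gradSq, pd_cutoff_eq_zero hR _ hx]
  refine mul_le_mul_of_nonneg_left ?_ (mul_nonneg hC.le (integral_nonneg fun x => ?_))
  · rw [← integral_const_mul, ← integral_const_mul, ← integral_add (hi1.const_mul _)
      (hi2.const_mul _)]
    refine integral_mono ?_ ((hi1.const_mul _).add (hi2.const_mul _))
      (gradSq_cutoff_pow_mul_le hf R k)
    refine hs.gradSq.continuous.integrable_of_hasCompactSupport ?_
    refine ((hasCompactSupport_of_eq_zero_outside hR hz).fderiv (𝕜 := ℝ)).of_eq_zero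
      fun x hx => ?_
    simp [gradSq, pd, hx]
  · have := cutoff_nonneg R x
    positivity

theorem integral_mul_gradSq_cutoff_le {c R : ℝ} (hR : 0 < R)
    (hc : ∀ x, gradSq (cutoff R) x ≤ c / R ^ 2) {f : ℝ × ℝ → ℝ} (hf : ContDiff ℝ ∞ f)
    (h0 : ∀ x, 0 ≤ f x) (hi : Integrable f) (k : ℕ) :
    ∫ x, cutoff R x ^ k * f x * gradSq (cutoff R) x ≤ c / R ^ 2 * ∫ x, f x := by
  rw [← integral_const_mul]
  refine integral_mono ?_ (hi.const_mul _) fun x => ?_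
  · refine integrable_of_eq_zero_outside hR (by have := contDiff_cutoff R; fun_prop) fun x hx => ?_
    simp [gradSq, pd_cutoff_eq_zero hR _ hx]
  · have h1 : cutoff R x ^ k * f x ≤ f x :=
      mul_le_of_le_one_left (h0 x) (pow_le_one₀ (cutoff_nonneg R x) (cutoff_le_one R x))
    calc cutoff R x ^ k * f x * gradSq (cutoff R) x ≤ f x * gradSq (cutoff R) x :=
          mul_le_mul_of_nonneg_right h1 (gradSq_nonneg _ _)
      _ ≤ f x * (c / R ^ 2) := mul_le_mul_of_nonneg_left (hc x) (h0 x)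
      _ = c / R ^ 2 * f x := mul_comm _ _

theorem tendsto_const_div_sq_atTop (c : ℝ) :
    Tendsto (fun R : ℝ => c / R ^ 2) atTop (nhds 0) :=
  tendsto_const_nhds.div_atTop (tendsto_pow_atTop (by norm_num))

/-- Nash's inequality. -/
theorem exists_nash : ∃ C : ℝ, 0 < C ∧ ∀ (f : ℝ × ℝ → ℝ), ContDiff ℝ ∞ f →
    Integrable (fun x => |f x|) → Integrable (fun x => gradSq f x) →
    Integrable (fun x => f x ^ 2) ∧
      (∫ x, f x ^ 2) ^ 2 ≤ C * (∫ x, |f x|) ^ 2 * ∫ x, gradSq f x := by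
  obtain ⟨C, hC, h⟩ := exists_ladyzhenskaya_cutoff
  obtain ⟨c, hc0, hc⟩ := exists_pd_cutoff_sq_le
  refine ⟨32 * C, by positivity, fun f hf h1 hg => ?_⟩
  set N := ∫ x, |f x| with hN
  set G := ∫ x, gradSq f x with hG
  have hN0 : 0 ≤ N := integral_nonneg fun x => abs_nonneg _
  have hG0 : 0 ≤ G := integral_nonneg fun x => gradSq_nonneg _ _
  rcases hN0.eq_or_lt with hNz | hNpos
  · have hz : (fun x => |f x|) =ᵐ[volume] 0 :=
      (integral_eq_zero_iff_of_nonneg (fun x => abs_nonneg (f x)) h1).1 hNz.symm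
    have hz' : (fun x => |f x|) = fun _ => 0 :=
      (Continuous.ae_eq_iff_eq volume hf.continuous.abs continuous_const).1 hz
    have hf0 : ∀ x, f x = 0 := fun x => abs_eq_zero.1 (congrFun hz' x)
    simp only [hf0]
    refine ⟨by simp, ?_⟩
    simp
    positivity
  have main := integrable_of_integral_cutoff_le (g := fun x => f x ^ 2) (hf.pow 2).continuous
    (fun x => sq_nonneg _) 3
    (B := fun R => √(32 * C * N ^ 2 * G + ((144 * C * N ^ 2 * c) / R ^ 2) ^ 2))
    (b := √(32 * C * N ^ 2 * G + 0 ^ 2)) ?_ ?_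
  · refine ⟨main.1, ?_⟩
    have hn : 0 ≤ ∫ x, f x ^ 2 := integral_nonneg fun x => sq_nonneg _
    have := pow_le_pow_left₀ hn main.2 2
    rwa [Real.sq_sqrt (by positivity), zero_pow (by norm_num), add_zero] at this
  · exact (Real.continuous_sqrt.tendsto _).comp
      (((tendsto_const_div_sq_atTop _).pow 2).const_add _)
  · intro R hR
    have hR0 : 0 < R := by linarith
    have hL := h f hf R hR0 2
    norm_num at hL
    set P := ∫ x, cutoff R x ^ 4 * f x ^ 2 with hP
    set Q := ∫ x, cutoff R x ^ 12 * f x ^ 4 with hQ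
    have i4 := integrable_cutoff_pow_mul hR0 3 (hf.pow 2)
    have i6 := integrable_cutoff_pow_mul hR0 5 (hf.pow 2)
    have i12 := integrable_cutoff_pow_mul hR0 11 (hf.pow 4)
    have hζ0 := cutoff_nonneg R
    have hζ1 := cutoff_le_one R
    have hP0 : 0 ≤ P := integral_nonneg fun x => mul_nonneg (pow_nonneg (hζ0 x) _) (sq_nonneg _)
    have hP6 : ∫ x, cutoff R x ^ 6 * f x ^ 2 ≤ P := integral_mono i6 i4 fun x =>
      mul_le_mul_of_nonneg_right (pow_le_pow_of_le_one (hζ0 x) (hζ1 x) (by norm_num))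
        (sq_nonneg _)
    have a2 : ∫ x, cutoff R x ^ 6 * gradSq f x ≤ G :=
      integral_cutoff_pow_mul_le hR0 5 hf.gradSq (gradSq_nonneg f) hg
    have a3 : ∫ x, cutoff R x ^ 4 * f x ^ 2 * gradSq (cutoff R) x ≤ c / R ^ 2 * P := by
      rw [hP, ← integral_const_mul]
      refine integral_mono ?_ (i4.const_mul _) fun x => ?_
      · refine integrable_of_eq_zero_outside hR0
          (by have := contDiff_cutoff R; fun_prop) fun x hx => ?_
        simp [gradSq, pd_cutoff_eq_zero hR0 _ hx]
      · have := mul_le_mul_of_nonneg_left (hc R hR0 x)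
          (mul_nonneg (pow_nonneg (hζ0 x) 4) (sq_nonneg (f x)))
        linarith [show cutoff R x ^ 4 * f x ^ 2 * gradSq (cutoff R) x ≤ _ from this]
    have hQ' : Q ≤ C * P * (2 * G + 18 * (c / R ^ 2 * P)) := by
      refine hL.trans ?_
      have n2 : 0 ≤ ∫ x, cutoff R x ^ 6 * gradSq f x := integral_nonneg fun x =>
        mul_nonneg (pow_nonneg (hζ0 x) _) (gradSq_nonneg _ _)
      have n3 : 0 ≤ ∫ x, cutoff R x ^ 4 * f x ^ 2 * gradSq (cutoff R) x :=
        integral_nonneg fun x => mul_nonneg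
          (mul_nonneg (pow_nonneg (hζ0 x) _) (sq_nonneg _)) (gradSq_nonneg _ _)
      gcongr
    rcases hP0.eq_or_lt with hPz | hPpos
    · rw [← hPz]; positivity
    have hgi : ∀ l : ℝ, 0 < l → l ^ 2 * P ≤ l ^ 3 * N + Q := by
      intro l hl
      rw [hP, hN, hQ, ← integral_const_mul, ← integral_const_mul,
        ← integral_add (h1.const_mul _) i12]
      refine integral_mono (i4.const_mul _) ((h1.const_mul _).add i12) fun x => ?_
      have e : f x ^ 2 = |f x| ^ 2 := (sq_abs _).symm
      have e' : f x ^ 4 = |f x| ^ 4 := (Even.pow_abs (by decide) _).symm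
      simp only [e, e']
      set t := |f x|
      have ht : 0 ≤ t := abs_nonneg _
      set s := cutoff R x ^ 4 * t with hs
      have hs0 : 0 ≤ s := mul_nonneg (pow_nonneg (hζ0 x) _) ht
      have e3 : l ^ 2 * (cutoff R x ^ 4 * t ^ 2) = l ^ 2 * s * t := by rw [hs]; ring
      have e4 : cutoff R x ^ 12 * t ^ 4 = s ^ 3 * t := by rw [hs]; ring
      rw [e3, e4]
      have : l ^ 2 * s ≤ l ^ 3 + s ^ 3 := by
        rcases le_total s l with hsl | hsl
        · have : l ^ 2 * s ≤ l ^ 2 * l := by gcongr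
          have : 0 ≤ s ^ 3 := by positivity
          nlinarith
        · have : l ^ 2 * s ≤ s ^ 2 * s := by gcongr
          have : 0 ≤ l ^ 3 := by positivity
          nlinarith
      nlinarith
    have h3 : P ^ 3 ≤ 8 * N ^ 2 * Q := by
      have := hgi (P / (2 * N)) (by positivity)
      have e1 : (P / (2 * N)) ^ 2 * P = P ^ 3 / (4 * N ^ 2) := by field_simp; ring
      have e2 : (P / (2 * N)) ^ 3 * N = P ^ 3 / (8 * N ^ 2) := by field_simp; ring
      rw [e1, e2] at this
      have e3 : P ^ 3 / (4 * N ^ 2) - P ^ 3 / (8 * N ^ 2) = P ^ 3 / (8 * N ^ 2) := by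
        field_simp; ring
      have h5 : P ^ 3 / (8 * N ^ 2) ≤ Q := by linarith
      rw [div_le_iff₀ (by positivity)] at h5
      linarith
    have h2 : P ^ 2 ≤ 16 * C * N ^ 2 * G + (144 * C * N ^ 2 * c / R ^ 2) * P := by
      have h6 : P * P ^ 2 ≤ P * (16 * C * N ^ 2 * G + (144 * C * N ^ 2 * c / R ^ 2) * P) := by
        calc P * P ^ 2 = P ^ 3 := by ring
          _ ≤ 8 * N ^ 2 * Q := h3
          _ ≤ 8 * N ^ 2 * (C * P * (2 * G + 18 * (c / R ^ 2 * P))) := by gcongr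
          _ = _ := by ring
      exact le_of_mul_le_mul_left h6 hPpos
    refine Real.le_sqrt_of_sq_le ?_
    nlinarith [sq_nonneg (P - 144 * C * N ^ 2 * c / R ^ 2)]

theorem integral_cutoff_mul_div_eq_zero {R : ℝ} (hR : 0 < R) (k : ℕ) {F₁ F₂ : ℝ × ℝ → ℝ}
    (h₁ : ContDiff ℝ ∞ F₁) (h₂ : ContDiff ℝ ∞ F₂) :
    Integrable (fun x => cutoff R x ^ (k + 1) * (pd (1, 0) F₁ x + pd (0, 1) F₂ x) +
        (k + 1) * cutoff R x ^ k * (pd (1, 0) (cutoff R) x * F₁ x + pd (0, 1) (cutoff R) x * F₂ x))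
      ∧ ∫ x, (cutoff R x ^ (k + 1) * (pd (1, 0) F₁ x + pd (0, 1) F₂ x) +
        (k + 1) * cutoff R x ^ k *
          (pd (1, 0) (cutoff R) x * F₁ x + pd (0, 1) (cutoff R) x * F₂ x)) = 0 := by
  have hζ : ContDiff ℝ ∞ (cutoff R) := contDiff_cutoff R
  have hs : ∀ F : ℝ × ℝ → ℝ, ContDiff ℝ ∞ F → ∀ v, ∀ x,
      pd v (fun y => cutoff R y ^ (k + 1) * F y) x = cutoff R x ^ (k + 1) * pd v F x +
        (k + 1) * cutoff R x ^ k * (pd v (cutoff R) x * F x) := by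
    intro F hF v x
    rw [pd_mul (hζ.pow _) hF, pd_pow hζ]
    push_cast
    ring
  have hz : ∀ F : ℝ × ℝ → ℝ, HasCompactSupport (fun x => cutoff R x ^ (k + 1) * F x) :=
    fun F => hasCompactSupport_of_eq_zero_outside hR fun x hx => by simp [cutoff_eq_zero hR hx]
  have e : ∀ x, cutoff R x ^ (k + 1) * (pd (1, 0) F₁ x + pd (0, 1) F₂ x) +
        (k + 1) * cutoff R x ^ k *
          (pd (1, 0) (cutoff R) x * F₁ x + pd (0, 1) (cutoff R) x * F₂ x) =
      pd (1, 0) (fun y => cutoff R y ^ (k + 1) * F₁ y) x +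
        pd (0, 1) (fun y => cutoff R y ^ (k + 1) * F₂ y) x := by
    intro x
    rw [hs F₁ h₁, hs F₂ h₂]
    ring
  simp_rw [e]
  have s₁ : ContDiff ℝ ∞ (fun y => cutoff R y ^ (k + 1) * F₁ y) := by fun_prop
  have s₂ : ContDiff ℝ ∞ (fun y => cutoff R y ^ (k + 1) * F₂ y) := by fun_prop
  have i₁ := (s₁.pd (1, 0)).continuous.integrable_of_hasCompactSupport (μ := volume)
    ((hz F₁).pd (1, 0))
  have i₂ := (s₂.pd (0, 1)).continuous.integrable_of_hasCompactSupport (μ := volume)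
    ((hz F₂).pd (0, 1))
  refine ⟨i₁.add i₂, ?_⟩
  rw [integral_add i₁ i₂, integral_pd_eq_zero s₁ (hz _), integral_pd_eq_zero s₂ (hz _), add_zero]

theorem ContDiff.lap {f : ℝ × ℝ → ℝ} (hf : ContDiff ℝ ∞ f) :
    ContDiff ℝ ∞ (fun x => lap f x) := by
  unfold _root_.lap
  exact ((hf.pd _).pd _).add ((hf.pd _).pd _)

/-- The cut-off Hessian is controlled by the Laplacian. -/
theorem integral_cutoff_hessSq_le {c R : ℝ} (hR : 0 < R)
    (hc : ∀ x, gradSq (cutoff R) x ≤ c / R ^ 2) {f : ℝ × ℝ → ℝ} (hf : ContDiff ℝ ∞ f)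
    (hg : Integrable (fun x => gradSq f x)) :
    ∫ x, cutoff R x ^ 4 * hessSq f x ≤
      2 * (∫ x, cutoff R x ^ 4 * lap f x ^ 2) + 32 * (c / R ^ 2 * ∫ x, gradSq f x) := by
  have hζ : ContDiff ℝ ∞ (cutoff R) := contDiff_cutoff R
  have d1 := hf.pd (1, 0)
  have d2 := hf.pd (0, 1)
  have d11 := d1.pd (1, 0)
  have d21 := d1.pd (0, 1)
  have d22 := d2.pd (0, 1)
  set F₁ : ℝ × ℝ → ℝ := fun x => pd (1, 0) f x * pd (0, 1) (pd (0, 1) f) x -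
    pd (0, 1) f x * pd (0, 1) (pd (1, 0) f) x with hF₁
  set F₂ : ℝ × ℝ → ℝ := fun x => pd (0, 1) f x * pd (1, 0) (pd (1, 0) f) x -
    pd (1, 0) f x * pd (0, 1) (pd (1, 0) f) x with hF₂
  have s₁ : ContDiff ℝ ∞ F₁ := (d1.mul d22).sub (d2.mul d21)
  have s₂ : ContDiff ℝ ∞ F₂ := (d2.mul d11).sub (d1.mul d21)
  obtain ⟨hi, h0⟩ := integral_cutoff_mul_div_eq_zero hR 3 s₁ s₂
  have hdiv : ∀ x, pd (1, 0) F₁ x + pd (0, 1) F₂ x =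
      2 * (pd (1, 0) (pd (1, 0) f) x * pd (0, 1) (pd (0, 1) f) x -
        pd (0, 1) (pd (1, 0) f) x ^ 2) := by
    intro x
    have c1 : pd (1, 0) (pd (0, 1) f) = pd (0, 1) (pd (1, 0) f) := funext (pd_comm hf _ _)
    have c2 : pd (1, 0) (pd (0, 1) (pd (0, 1) f)) x = pd (0, 1) (pd (0, 1) (pd (1, 0) f)) x := by
      rw [pd_comm d2, c1]
    have c3 : pd (1, 0) (pd (0, 1) (pd (1, 0) f)) x = pd (0, 1) (pd (1, 0) (pd (1, 0) f)) x :=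
      pd_comm d1 _ _ _
    rw [hF₁, hF₂, pd_sub (d1.mul d22) (d2.mul d21), pd_sub (d2.mul d11) (d1.mul d21),
      pd_mul d1 d22, pd_mul d2 d21, pd_mul d2 d11, pd_mul d1 d21, c1, c2, c3]
    ring
  have ih := integrable_cutoff_pow_mul hR 3 hf.hessSq
  have il := integrable_cutoff_pow_mul hR 3 (hf.lap.pow 2)
  have ig : Integrable (fun x => cutoff R x ^ 2 * gradSq f x * gradSq (cutoff R) x) := by
    refine integrable_of_eq_zero_outside hR (by fun_prop) fun x hx => ?_
    simp [cutoff_eq_zero hR hx]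
  have hA := integral_mul_gradSq_cutoff_le hR hc hf.gradSq (gradSq_nonneg f) hg 2
  have hmono := integral_mono ih (((il.const_mul 2).add (ig.const_mul 32)).add (hi.const_mul (-2)))
    (fun x => by
      have c1 : pd (1, 0) (pd (0, 1) f) x = pd (0, 1) (pd (1, 0) f) x := pd_comm hf _ _ x
      have hd := hdiv x
      simp only [Pi.add_apply]
      rw [hd]
      simp only [hF₁, hF₂, hessSq, gradSq, lap, c1]
      set z := cutoff R x
      set a := pd (1, 0) (cutoff R) x
      set b := pd (0, 1) (cutoff R) x
      set f1 := pd (1, 0) f x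
      set f2 := pd (0, 1) f x
      set f11 := pd (1, 0) (pd (1, 0) f) x
      set f12 := pd (0, 1) (pd (1, 0) f) x
      set f22 := pd (0, 1) (pd (0, 1) f) x
      push_cast
      nlinarith [sq_nonneg (z ^ 2 * f22 - 4 * (z * a * f1)),
        sq_nonneg (z ^ 2 * f12 + 4 * (z * a * f2)), sq_nonneg (z ^ 2 * f11 - 4 * (z * b * f2)),
        sq_nonneg (z ^ 2 * f12 + 4 * (z * b * f1)),
        mul_nonneg (mul_nonneg (sq_nonneg z) (add_nonneg (sq_nonneg f1) (sq_nonneg f2)))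
          (add_nonneg (sq_nonneg a) (sq_nonneg b))])
  rw [integral_add' ((il.const_mul 2).add (ig.const_mul 32)) (hi.const_mul (-2)),
    integral_add' (il.const_mul 2) (ig.const_mul 32), integral_const_mul, integral_const_mul,
    integral_const_mul, h0] at hmono
  linarith

/-- A weighted Hardy-type inequality: a function with square-integrable gradient is
square integrable against `(1 + |x|²) ^ (-5/4)`. -/
theorem integrable_sq_mul_weight {f : ℝ × ℝ → ℝ} (hf : ContDiff ℝ ∞ f)
    (hg : Integrable (fun x => gradSq f x)) :
    Integrable (fun x : ℝ × ℝ => f x ^ 2 * (1 + x.1 ^ 2 + x.2 ^ 2) ^ (-(5 / 4) : ℝ)) := by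
  set q : ℝ × ℝ → ℝ := fun x => (1 + x.1 ^ 2 + x.2 ^ 2) ^ (-(5 / 4) : ℝ) with hq
  have hρ : ∀ x : ℝ × ℝ, 1 ≤ 1 + x.1 ^ 2 + x.2 ^ 2 := fun x => by
    nlinarith [sq_nonneg x.1, sq_nonneg x.2]
  have hρ0 : ∀ x : ℝ × ℝ, 1 + x.1 ^ 2 + x.2 ^ 2 ≠ 0 := fun x => by linarith [hρ x]
  have sq' : ContDiff ℝ ∞ q := by
    refine ContDiff.rpow_const_of_ne (by fun_prop) hρ0
  have q0 : ∀ x, 0 ≤ q x := fun x => Real.rpow_nonneg (by linarith [hρ x]) _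
  have q1 : ∀ x, q x * (1 + x.1 ^ 2 + x.2 ^ 2) ≤ 1 := by
    intro x
    have h1 : q x * (1 + x.1 ^ 2 + x.2 ^ 2) = (1 + x.1 ^ 2 + x.2 ^ 2) ^ (-(1 / 4) : ℝ) := by
      rw [hq]
      conv_lhs => rw [← Real.rpow_add_one (hρ0 x)]
      norm_num
    rw [h1]
    exact Real.rpow_le_one_of_one_le_of_nonpos (hρ x) (by norm_num)
  have hdq : ∀ v x : ℝ × ℝ, pd v q x * (1 + x.1 ^ 2 + x.2 ^ 2) =
      -(5 / 2) * (x.1 * v.1 + x.2 * v.2) * q x := by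
    intro v x
    have h2 : HasFDerivAt (fun y : ℝ × ℝ => 1 + y.1 ^ 2 + y.2 ^ 2) _ x :=
      (((hasFDerivAt_fst (𝕜 := ℝ) (p := x)).pow 2).const_add 1).add
        ((hasFDerivAt_snd (𝕜 := ℝ) (p := x)).pow 2)
    have h3 := (h2.rpow_const (p := (-(5 / 4) : ℝ)) (Or.inl (hρ0 x)))
    have h4 : pd v q x = _ := congrArg (fun L : ℝ × ℝ →L[ℝ] ℝ => L v) h3.fderiv
    have h5 : (1 + x.1 ^ 2 + x.2 ^ 2) ^ (-(5 / 4) - 1 : ℝ) * (1 + x.1 ^ 2 + x.2 ^ 2) = q x := by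
      conv_lhs => rw [← Real.rpow_add_one (hρ0 x)]
      norm_num [hq]
    rw [h4, ← h5]
    simp
    ring
  have sx1 : ContDiff ℝ ∞ (fun x : ℝ × ℝ => x.1) := contDiff_fst
  have sx2 : ContDiff ℝ ∞ (fun x : ℝ × ℝ => x.2) := contDiff_snd
  have sW : ContDiff ℝ ∞ (fun x => f x ^ 2 * q x) := (hf.pow 2).mul sq'
  have s₁ : ContDiff ℝ ∞ (fun x : ℝ × ℝ => x.1 * (f x ^ 2 * q x)) := sx1.mul sW
  have s₂ : ContDiff ℝ ∞ (fun x : ℝ × ℝ => x.2 * (f x ^ 2 * q x)) := sx2.mul sW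
  have p1 : ∀ v x : ℝ × ℝ, pd v (fun x : ℝ × ℝ => x.1) x = v.1 := fun v x => by
    simp [pd, fderiv_fst]
  have p2 : ∀ v x : ℝ × ℝ, pd v (fun x : ℝ × ℝ => x.2) x = v.2 := fun v x => by
    simp [pd, fderiv_snd]
  have i5 := integrable_cutoff_pow_mul (R := 5) (by norm_num) 0 (hf.pow 2)
  refine (integrable_of_integral_cutoff_le (g := fun x => f x ^ 2 * q x) sW.continuous
    (fun x => mul_nonneg (sq_nonneg _) (q0 x)) 0
    (B := fun _ => 8 * ((5 / 2) * (∫ x, cutoff 5 x ^ (0 + 1) * f x ^ 2) + 4 * ∫ x, gradSq f x))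
    tendsto_const_nhds fun R hR => ?_).1
  have hR0 : 0 < R := by linarith
  obtain ⟨hi, h0⟩ := integral_cutoff_mul_div_eq_zero hR0 0 s₁ s₂
  have iW := integrable_cutoff_pow_mul hR0 0 sW
  have hmono := integral_mono (iW.const_mul (1 / 8))
    (((i5.const_mul (5 / 2)).add (hg.const_mul 4)).sub hi) (fun x => by
      simp only [Pi.add_apply, Pi.sub_apply]
      rw [pd_mul sx1 sW, pd_mul sx2 sW, pd_mul (hf.pow 2) sq', pd_mul (hf.pow 2) sq',
        pd_pow hf, pd_pow hf, p1, p2]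
      simp only [zero_add, pow_one, pow_zero, Nat.cast_zero, one_mul]
      have hrad := pd_cutoff_radial_nonpos R x
      have hd1 := hdq (1, 0) x
      have hd2 := hdq (0, 1) x
      simp only [mul_one, mul_zero, add_zero, zero_add] at hd1 hd2
      have hz0 := cutoff_nonneg R x
      have hz1 := cutoff_le_one R x
      have hy0 := cutoff_nonneg 5 x
      have hq0 := q0 x
      have hq1 := q1 x
      have h5 : 1 + x.1 ^ 2 + x.2 ^ 2 < 20 → cutoff 5 x = 1 := fun h =>
        cutoff_eq_one (by norm_num) (by linarith)
      have hρx := hρ x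
      unfold gradSq
      set z := cutoff R x
      set y := cutoff 5 x
      set a := pd (1, 0) (cutoff R) x
      set b := pd (0, 1) (cutoff R) x
      set f1 := pd (1, 0) f x
      set f2 := pd (0, 1) f x
      set Q1 := pd (1, 0) q x
      set Q2 := pd (0, 1) q x
      set Q := q x
      set X := x.1
      set Y := x.2
      set F := f x
      set ρ := 1 + X ^ 2 + Y ^ 2 with hρdef
      have hdiv : X * Q1 + Y * Q2 = -(5 / 2) * Q + (5 / 2) * (Q / ρ) := by
        field_simp
        have : ρ - 1 = X ^ 2 + Y ^ 2 := by rw [hρdef]; ring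
        linear_combination 2 * X * hd1 + 2 * Y * hd2 - 5 * Q * this
      have hlow : (5 / 2) * (z * F ^ 2 * (Q / ρ)) ≤
          1 / 8 * (z * F ^ 2 * Q) + 5 / 2 * (y * F ^ 2) := by
        by_cases hc : ρ < 20
        · rw [h5 hc]
          have hQ1 : Q / ρ ≤ 1 := (div_le_one (by linarith)).2 (by nlinarith)
          have hQ2 : 0 ≤ Q / ρ := by positivity
          have : z * F ^ 2 * (Q / ρ) ≤ 1 * F ^ 2 * 1 := by gcongr
          have : 0 ≤ z * F ^ 2 * Q := by positivity
          linarith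
        · push Not at hc
          have h1 : Q / ρ ≤ Q / 20 := by gcongr
          have h2 : z * F ^ 2 * (Q / ρ) ≤ z * F ^ 2 * (Q / 20) := by gcongr
          have : 0 ≤ y * F ^ 2 := by positivity
          linarith
      have hgrad : -(2 * z * Q * F * (X * f1 + Y * f2)) ≥
          -(1 / 4 * (z * F ^ 2 * Q)) - 4 * (f1 ^ 2 + f2 ^ 2) := by
        have h1 : Q * (X * f1 + Y * f2) ^ 2 ≤ f1 ^ 2 + f2 ^ 2 := by
          calc Q * (X * f1 + Y * f2) ^ 2 ≤ Q * ((X ^ 2 + Y ^ 2) * (f1 ^ 2 + f2 ^ 2)) := by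
                gcongr
                nlinarith [sq_nonneg (X * f2 - Y * f1)]
            _ ≤ (Q * ρ) * (f1 ^ 2 + f2 ^ 2) := by
                rw [hρdef]
                nlinarith [mul_nonneg hq0 (add_nonneg (sq_nonneg f1) (sq_nonneg f2))]
            _ ≤ 1 * (f1 ^ 2 + f2 ^ 2) := by gcongr
            _ = _ := one_mul _
        have h2 : 0 ≤ z * Q * (F / 2 - 2 * (X * f1 + Y * f2)) ^ 2 := by positivity
        have h3 : z * (Q * (X * f1 + Y * f2) ^ 2) ≤ 1 * (f1 ^ 2 + f2 ^ 2) := by gcongr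
        nlinarith
      have hr : F ^ 2 * Q * (X * a + Y * b) ≤ 0 :=
        mul_nonpos_of_nonneg_of_nonpos (by positivity) hrad
      have hdm : z * F ^ 2 * (X * Q1 + Y * Q2) =
          z * F ^ 2 * (-(5 / 2) * Q + (5 / 2) * (Q / ρ)) := by rw [hdiv]
      push_cast
      simp only [pow_one]
      linarith)
  rw [integral_sub' ((i5.const_mul (5 / 2)).add (hg.const_mul 4)) hi,
    integral_add' (i5.const_mul (5 / 2)) (hg.const_mul 4), integral_const_mul, integral_const_mul,
    integral_const_mul, h0] at hmono
  simp only [Nat.succ_eq_add_one]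
  linarith

/-- Growth of the `L⁴` mass of a function with square-integrable gradient. -/
theorem exists_integral_cutoff_pow_four_le {f : ℝ × ℝ → ℝ} (hf : ContDiff ℝ ∞ f)
    (hg : Integrable (fun x => gradSq f x)) :
    ∃ M : ℝ, 0 ≤ M ∧ ∀ R : ℝ, 1 ≤ R → ∫ x, cutoff R x ^ 4 * f x ^ 4 ≤ M * R ^ 3 := by
  obtain ⟨C, hC, h⟩ := exists_ladyzhenskaya_cutoff
  obtain ⟨c, hc0, hc⟩ := exists_pd_cutoff_sq_le
  have hw := integrable_sq_mul_weight hf hg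
  set q : ℝ × ℝ → ℝ := fun x => (1 + x.1 ^ 2 + x.2 ^ 2) ^ (-(5 / 4) : ℝ) with hq
  set W := ∫ x, f x ^ 2 * q x with hW
  set G := ∫ x, gradSq f x with hG
  have q0 : ∀ x, 0 ≤ q x := fun x => Real.rpow_nonneg (by positivity) _
  have hW0 : 0 ≤ W := integral_nonneg fun x => mul_nonneg (sq_nonneg _) (q0 x)
  have hG0 : 0 ≤ G := integral_nonneg fun x => gradSq_nonneg _ _
  set k : ℝ := 3 ^ (5 / 4 : ℝ) with hk
  have hk0 : 0 < k := by positivity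
  refine ⟨C * (k * W) * (2 * G) + 2 * C * c * (k * W) ^ 2, by positivity, fun R hR => ?_⟩
  have hR0 : 0 < R := by linarith
  set A : ℝ := (3 * R ^ 2) ^ (5 / 4 : ℝ) with hA
  have hA0 : 0 < A := by positivity
  have hAk : A = k * R ^ (5 / 2 : ℝ) := by
    rw [hA, hk, Real.mul_rpow (by norm_num) (by positivity), ← Real.rpow_natCast R 2,
      ← Real.rpow_mul hR0.le]
    norm_num
  have hA3 : A ≤ k * R ^ 3 := by
    rw [hAk, ← Real.rpow_natCast R 3]
    gcongr
    norm_num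
  have hA2 : A ^ 2 = k ^ 2 * R ^ 5 := by
    rw [hAk, mul_pow, ← Real.rpow_natCast (R ^ (5 / 2 : ℝ)) 2, ← Real.rpow_mul hR0.le,
      ← Real.rpow_natCast R 5]
    norm_num
  have hqA : ∀ x : ℝ × ℝ, ¬ (2 * R ^ 2 < x.1 ^ 2 + x.2 ^ 2) → 1 ≤ A * q x := by
    intro x hx
    push Not at hx
    have hρ : 0 < 1 + x.1 ^ 2 + x.2 ^ 2 := by positivity
    have h1 : (1 + x.1 ^ 2 + x.2 ^ 2) ^ (5 / 4 : ℝ) ≤ A := by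
      rw [hA]
      refine Real.rpow_le_rpow hρ.le ?_ (by norm_num)
      nlinarith
    have h2 : (1 + x.1 ^ 2 + x.2 ^ 2) ^ (5 / 4 : ℝ) * q x = 1 := by
      rw [hq]
      simp only
      rw [← Real.rpow_add hρ]
      norm_num
    rw [← h2]
    exact mul_le_mul_of_nonneg_right h1 (q0 x)
  have b1 : ∫ x, cutoff R x ^ 2 * f x ^ 2 ≤ A * W := by
    rw [hW, ← integral_const_mul]
    refine integral_mono (integrable_cutoff_pow_mul hR0 1 (hf.pow 2)) (hw.const_mul _) fun x => ?_
    by_cases hx : 2 * R ^ 2 < x.1 ^ 2 + x.2 ^ 2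
    · have := mul_nonneg hA0.le (mul_nonneg (sq_nonneg (f x)) (q0 x))
      simpa [cutoff_eq_zero hR0 hx] using this
    · have h1 : cutoff R x ^ 2 * f x ^ 2 ≤ 1 * f x ^ 2 := by
        gcongr
        exact pow_le_one₀ (cutoff_nonneg R x) (cutoff_le_one R x)
      have h2 := mul_le_mul_of_nonneg_right (hqA x hx) (sq_nonneg (f x))
      calc _ ≤ _ := h1
        _ ≤ _ := h2
        _ = _ := by ring
  have b2 : ∫ x, cutoff R x ^ 0 * f x ^ 2 * gradSq (cutoff R) x ≤ c / R ^ 2 * (A * W) := by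
    rw [hW, ← integral_const_mul, ← integral_const_mul]
    refine integral_mono ?_ ((hw.const_mul _).const_mul _) fun x => ?_
    · refine integrable_of_eq_zero_outside hR0
        (by have := contDiff_cutoff R; fun_prop) fun x hx => ?_
      simp [gradSq, pd_cutoff_eq_zero hR0 _ hx]
    · by_cases hx : 2 * R ^ 2 < x.1 ^ 2 + x.2 ^ 2
      · have := mul_nonneg (div_nonneg hc0.le (sq_nonneg R))
          (mul_nonneg hA0.le (mul_nonneg (sq_nonneg (f x)) (q0 x)))
        simpa [gradSq, pd_cutoff_eq_zero hR0 _ hx] using this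
      · have h2 := mul_le_mul_of_nonneg_right (hqA x hx) (sq_nonneg (f x))
        calc cutoff R x ^ 0 * f x ^ 2 * gradSq (cutoff R) x
            = (1 * f x ^ 2) * gradSq (cutoff R) x := by ring
          _ ≤ (A * q x * f x ^ 2) * (c / R ^ 2) :=
            mul_le_mul h2 (hc R hR0 x) (gradSq_nonneg _ _) (by have := q0 x; positivity)
          _ = _ := by ring
  have b3 : ∫ x, cutoff R x ^ 2 * gradSq f x ≤ G :=
    integral_cutoff_pow_mul_le hR0 1 hf.gradSq (gradSq_nonneg f) hg
  have h1 := h f hf R hR0 0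
  simp only [mul_zero, zero_add, Nat.cast_zero, one_pow, mul_one] at h1
  have n2 : 0 ≤ ∫ x, cutoff R x ^ 2 * gradSq f x := integral_nonneg fun x =>
    mul_nonneg (sq_nonneg _) (gradSq_nonneg _ _)
  have n3 : 0 ≤ ∫ x, cutoff R x ^ 0 * f x ^ 2 * gradSq (cutoff R) x :=
    integral_nonneg fun x => mul_nonneg (by positivity) (gradSq_nonneg _ _)
  calc _ ≤ _ := h1
    _ ≤ C * (A * W) * (2 * G + 2 * (c / R ^ 2 * (A * W))) := by gcongr
    _ = C * (A * W) * (2 * G) + 2 * C * c * W ^ 2 * A ^ 2 / R ^ 2 := by ring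
    _ ≤ C * (k * R ^ 3 * W) * (2 * G) + 2 * C * c * W ^ 2 * (k ^ 2 * R ^ 5) / R ^ 2 := by
      rw [hA2]; gcongr
    _ = _ := by field_simp

/-- The scalar curl `∂₂f - ∂₁g` of a planar vector field `(f, g)`. -/
noncomputable def curl (f g : ℝ × ℝ → ℝ) (x : ℝ × ℝ) : ℝ :=
  pd (0, 1) f x - pd (1, 0) g x

/-- The quadratic term `(∂₂b·∇u₁ - ∂₁b·∇u₂) - (∂₂u·∇b₁ - ∂₁u·∇b₂)` of the current equation. -/
noncomputable def stretch (u₁ u₂ b₁ b₂ : ℝ × ℝ → ℝ) (x : ℝ × ℝ) : ℝ :=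
  (pd (0, 1) b₁ x * pd (1, 0) u₁ x + pd (0, 1) b₂ x * pd (0, 1) u₁ x -
      pd (1, 0) b₁ x * pd (1, 0) u₂ x - pd (1, 0) b₂ x * pd (0, 1) u₂ x) -
    (pd (0, 1) u₁ x * pd (1, 0) b₁ x + pd (0, 1) u₂ x * pd (0, 1) b₁ x -
      pd (1, 0) u₁ x * pd (1, 0) b₂ x - pd (1, 0) u₂ x * pd (0, 1) b₂ x)

/-- Smooth solutions of the vorticity formulation of the stationary MHD system with finite
Dirichlet energy. -/
structure IsVorticityMHD (μ ν : ℝ) (u₁ u₂ b₁ b₂ : ℝ × ℝ → ℝ) : Prop where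
  μ_pos : 0 < μ
  ν_pos : 0 < ν
  smooth_u₁ : ContDiff ℝ ∞ u₁
  smooth_u₂ : ContDiff ℝ ∞ u₂
  smooth_b₁ : ContDiff ℝ ∞ b₁
  smooth_b₂ : ContDiff ℝ ∞ b₂
  div_u : ∀ x, pd (1, 0) u₁ x + pd (0, 1) u₂ x = 0
  div_b : ∀ x, pd (1, 0) b₁ x + pd (0, 1) b₂ x = 0
  vorticity : ∀ x, μ * lap (curl u₁ u₂) x =
    u₁ x * pd (1, 0) (curl u₁ u₂) x + u₂ x * pd (0, 1) (curl u₁ u₂) x -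
      (b₁ x * pd (1, 0) (curl b₁ b₂) x + b₂ x * pd (0, 1) (curl b₁ b₂) x)
  current : ∀ x, ν * lap (curl b₁ b₂) x =
    u₁ x * pd (1, 0) (curl b₁ b₂) x + u₂ x * pd (0, 1) (curl b₁ b₂) x -
      (b₁ x * pd (1, 0) (curl u₁ u₂) x + b₂ x * pd (0, 1) (curl u₁ u₂) x) -
      stretch u₁ u₂ b₁ b₂ x
  energy_u₁ : Integrable (fun x => gradSq u₁ x)
  energy_u₂ : Integrable (fun x => gradSq u₂ x)
  energy_b₁ : Integrable (fun x => gradSq b₁ x)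
  energy_b₂ : Integrable (fun x => gradSq b₂ x)

@[fun_prop]
theorem ContDiff.curl {f g : ℝ × ℝ → ℝ} (hf : ContDiff ℝ ∞ f) (hg : ContDiff ℝ ∞ g) :
    ContDiff ℝ ∞ (fun x => curl f g x) :=
  (hf.pd _).sub (hg.pd _)

@[fun_prop]
theorem ContDiff.stretch {u₁ u₂ b₁ b₂ : ℝ × ℝ → ℝ} (h₁ : ContDiff ℝ ∞ u₁)
    (h₂ : ContDiff ℝ ∞ u₂) (h₃ : ContDiff ℝ ∞ b₁) (h₄ : ContDiff ℝ ∞ b₂) :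
    ContDiff ℝ ∞ (fun x => stretch u₁ u₂ b₁ b₂ x) := by
  unfold _root_.stretch
  fun_prop

theorem pd_curl {f g : ℝ × ℝ → ℝ} (hf : ContDiff ℝ ∞ f) (hg : ContDiff ℝ ∞ g) (v x : ℝ × ℝ) :
    pd v (curl f g) x = pd v (pd (0, 1) f) x - pd v (pd (1, 0) g) x :=
  pd_sub (hf.pd (0, 1)) (hg.pd (1, 0)) v x

theorem pd_congr {f g : ℝ × ℝ → ℝ} (h : ∀ x, f x = g x) (v x : ℝ × ℝ) : pd v f x = pd v g x := by
  rw [funext h]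

/-- The Laplacian of the components of a divergence-free field. -/
theorem lap_eq_pd_curl {f g : ℝ × ℝ → ℝ} (hf : ContDiff ℝ ∞ f) (hg : ContDiff ℝ ∞ g)
    (hd : ∀ x, pd (1, 0) f x + pd (0, 1) g x = 0) (x : ℝ × ℝ) :
    lap f x = pd (0, 1) (curl f g) x ∧ lap g x = -pd (1, 0) (curl f g) x := by
  have h : ∀ v, pd v (pd (1, 0) f) x + pd v (pd (0, 1) g) x = 0 := fun v => by
    rw [← pd_add (hf.pd _) (hg.pd _), pd_congr hd, pd_const]
  have h1 := h (1, 0)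
  have h2 := h (0, 1)
  rw [pd_curl hf hg, pd_curl hf hg, pd_comm hg (0, 1) (1, 0), pd_comm hf (1, 0) (0, 1)]
  unfold lap
  constructor <;> linarith

theorem lap_curl {f g : ℝ × ℝ → ℝ} (hf : ContDiff ℝ ∞ f) (hg : ContDiff ℝ ∞ g) (x : ℝ × ℝ) :
    lap (curl f g) x = pd (0, 1) (lap f) x - pd (1, 0) (lap g) x := by
  have e : ∀ v, pd v (curl f g) = fun y => pd v (pd (0, 1) f) y - pd v (pd (1, 0) g) y :=
    fun v => funext fun y => pd_curl hf hg v y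
  have c : ∀ (h : ℝ × ℝ → ℝ), ContDiff ℝ ∞ h → ∀ v w y,
      pd v (pd v (pd w h)) y = pd w (pd v (pd v h)) y := by
    intro h hh v w y
    rw [show pd v (pd w h) = pd w (pd v h) from funext (pd_comm hh v w), pd_comm (hh.pd v)]
  have l : ∀ (h : ℝ × ℝ → ℝ), ContDiff ℝ ∞ h → ∀ w, pd w (lap h) x =
      pd w (pd (1, 0) (pd (1, 0) h)) x + pd w (pd (0, 1) (pd (0, 1) h)) x :=
    fun h hh w => pd_add ((hh.pd _).pd _) ((hh.pd _).pd _) w x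
  rw [l f hf, l g hg]
  unfold lap
  rw [e, e, pd_sub ((hf.pd _).pd _) ((hg.pd _).pd _), pd_sub ((hf.pd _).pd _) ((hg.pd _).pd _),
    c f hf (1, 0) (0, 1), c g hg (0, 1) (1, 0)]
  ring

theorem pd_mul_add_mul {p q f g : ℝ × ℝ → ℝ} (hp : ContDiff ℝ ∞ p) (hq : ContDiff ℝ ∞ q)
    (hf : ContDiff ℝ ∞ f) (hg : ContDiff ℝ ∞ g) (v x : ℝ × ℝ) :
    pd v (fun y => p y * f y + q y * g y) x =
      p x * pd v f x + q x * pd v g x + (pd v p x * f x + pd v q x * g x) := by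
  rw [pd_add (hp.mul hf) (hq.mul hg), pd_mul hp hf, pd_mul hq hg]
  ring

/-- The curl of the transport term `v·∇f`. -/
theorem curl_advect {p q f g : ℝ × ℝ → ℝ} (hp : ContDiff ℝ ∞ p) (hq : ContDiff ℝ ∞ q)
    (hf : ContDiff ℝ ∞ f) (hg : ContDiff ℝ ∞ g) (x : ℝ × ℝ) :
    pd (0, 1) (fun y => p y * pd (1, 0) f y + q y * pd (0, 1) f y) x -
        pd (1, 0) (fun y => p y * pd (1, 0) g y + q y * pd (0, 1) g y) x =
      p x * pd (1, 0) (curl f g) x + q x * pd (0, 1) (curl f g) x +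
        (pd (0, 1) p x * pd (1, 0) f x + pd (0, 1) q x * pd (0, 1) f x -
          pd (1, 0) p x * pd (1, 0) g x - pd (1, 0) q x * pd (0, 1) g x) := by
  rw [pd_mul_add_mul hp hq (hf.pd _) (hf.pd _), pd_mul_add_mul hp hq (hg.pd _) (hg.pd _),
    pd_curl hf hg, pd_curl hf hg, pd_comm hf (0, 1) (1, 0), pd_comm hg (1, 0) (0, 1)]
  ring

theorem isVorticityMHD_of_isMHD {μ ν : ℝ} (hμ : 0 < μ) (hν : 0 < ν) {u b : ℝ × ℝ → ℝ × ℝ}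
    {pr : ℝ × ℝ → ℝ} (hu : ContDiff ℝ ∞ u) (hb : ContDiff ℝ ∞ b) (hp : ContDiff ℝ ∞ pr)
    (h : isMHD μ ν u b pr)
    (e₁ : Integrable (fun x => gradSq (fun y => (u y).1) x))
    (e₂ : Integrable (fun x => gradSq (fun y => (u y).2) x))
    (e₃ : Integrable (fun x => gradSq (fun y => (b y).1) x))
    (e₄ : Integrable (fun x => gradSq (fun y => (b y).2) x)) :
    IsVorticityMHD μ ν (fun y => (u y).1) (fun y => (u y).2) (fun y => (b y).1)
      (fun y => (b y).2) := by
  obtain ⟨h1, h2, h3, h4, h5, h6⟩ := h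
  have hu1 : ContDiff ℝ ∞ (fun y => (u y).1) := contDiff_fst.comp hu
  have hu2 : ContDiff ℝ ∞ (fun y => (u y).2) := contDiff_snd.comp hu
  have hb1 : ContDiff ℝ ∞ (fun y => (b y).1) := contDiff_fst.comp hb
  have hb2 : ContDiff ℝ ∞ (fun y => (b y).2) := contDiff_snd.comp hb
  unfold advect at h1 h2 h3 h4
  unfold divg at h5 h6
  have t : ∀ {p q f : ℝ × ℝ → ℝ}, ContDiff ℝ ∞ p → ContDiff ℝ ∞ q → ContDiff ℝ ∞ f →
      ContDiff ℝ ∞ (fun y => p y * pd (1, 0) f y + q y * pd (0, 1) f y) :=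
    fun hp hq hf => (hp.mul (hf.pd _)).add (hq.mul (hf.pd _))
  have eqn : ∀ {κ : ℝ} {f A B : ℝ × ℝ → ℝ}, ContDiff ℝ ∞ f → ContDiff ℝ ∞ A → ContDiff ℝ ∞ B →
      (∀ x, -(κ * lap f x) + A x = B x) → ∀ v x, κ * pd v (lap f) x = pd v A x - pd v B x := by
    intro κ f A B hf hA hB hh v x
    have := pd_congr (f := fun y => κ * lap f y) (g := fun y => A y - B y)
      (fun y => by linarith [hh y]) v x
    rw [pd_sub hA hB, pd_mul contDiff_const hf.lap, pd_const] at this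
    linarith
  set u1 : ℝ × ℝ → ℝ := fun y => (u y).1
  set u2 : ℝ × ℝ → ℝ := fun y => (u y).2
  set b1 : ℝ × ℝ → ℝ := fun y => (b y).1
  set b2 : ℝ × ℝ → ℝ := fun y => (b y).2
  have k1 := eqn (κ := μ) hu1 ((t hu1 hu2 hu1).add (hp.pd (1, 0))) (t hb1 hb2 hb1)
    (fun x => by linarith [h1 x]) (0, 1)
  have k2 := eqn (κ := μ) hu2 ((t hu1 hu2 hu2).add (hp.pd (0, 1))) (t hb1 hb2 hb2)
    (fun x => by linarith [h2 x]) (1, 0)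
  have k3 := eqn (κ := ν) hb1 (t hu1 hu2 hb1) (t hb1 hb2 hu1) h3 (0, 1)
  have k4 := eqn (κ := ν) hb2 (t hu1 hu2 hb2) (t hb1 hb2 hu2) h4 (1, 0)
  refine ⟨hμ, hν, hu1, hu2, hb1, hb2, h5, h6, fun x => ?_, fun x => ?_, e₁, e₂, e₃, e₄⟩
  · have q1 := k1 x
    have q2 := k2 x
    rw [pd_add (t hu1 hu2 hu1) (hp.pd (1, 0))] at q1
    rw [pd_add (t hu1 hu2 hu2) (hp.pd (0, 1)), pd_comm hp] at q2
    have c1 := curl_advect hu1 hu2 hu1 hu2 x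
    have c2 := curl_advect hb1 hb2 hb1 hb2 x
    have d1 := h5 x
    have d2 := h6 x
    rw [lap_curl hu1 hu2]
    linear_combination q1 - q2 + c1 - c2 +
      (pd (0, 1) u1 x - pd (1, 0) u2 x) * d1 - (pd (0, 1) b1 x - pd (1, 0) b2 x) * d2
  · have q1 := k3 x
    have q2 := k4 x
    have c1 := curl_advect hu1 hu2 hb1 hb2 x
    have c2 := curl_advect hb1 hb2 hu1 hu2 x
    rw [lap_curl hb1 hb2]
    unfold stretch
    linear_combination q1 - q2 + c1 - c2

theorem stretch_sq_le (u₁ u₂ b₁ b₂ : ℝ × ℝ → ℝ) (x : ℝ × ℝ) :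
    stretch u₁ u₂ b₁ b₂ x ^ 2 ≤
      4 * ((gradSq u₁ x + gradSq u₂ x) * (gradSq b₁ x + gradSq b₂ x)) := by
  have cs : ∀ p q r s a b c d : ℝ, (p * a + q * b - r * c - s * d) ^ 2 ≤
      (a ^ 2 + b ^ 2 + (c ^ 2 + d ^ 2)) * (p ^ 2 + q ^ 2 + (r ^ 2 + s ^ 2)) := by
    intro p q r s a b c d
    nlinarith [sq_nonneg (p * b - q * a), sq_nonneg (p * c + r * a), sq_nonneg (p * d + s * a),
      sq_nonneg (q * c + r * b), sq_nonneg (q * d + s * b), sq_nonneg (r * d - s * c)]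
  have h1 := cs (pd (0, 1) b₁ x) (pd (0, 1) b₂ x) (pd (1, 0) b₁ x) (pd (1, 0) b₂ x)
    (pd (1, 0) u₁ x) (pd (0, 1) u₁ x) (pd (1, 0) u₂ x) (pd (0, 1) u₂ x)
  have h2 := cs (pd (0, 1) u₁ x) (pd (0, 1) u₂ x) (pd (1, 0) u₁ x) (pd (1, 0) u₂ x)
    (pd (1, 0) b₁ x) (pd (0, 1) b₁ x) (pd (1, 0) b₂ x) (pd (0, 1) b₂ x)
  have h3 : ∀ s t : ℝ, (s - t) ^ 2 ≤ 2 * s ^ 2 + 2 * t ^ 2 := fun s t => by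
    nlinarith [sq_nonneg (s + t)]
  unfold stretch gradSq
  refine (h3 _ _).trans ?_
  nlinarith

theorem curl_sq_le (f g : ℝ × ℝ → ℝ) (x : ℝ × ℝ) :
    curl f g x ^ 2 ≤ 2 * (gradSq f x + gradSq g x) := by
  unfold curl gradSq
  nlinarith [sq_nonneg (pd (0, 1) f x + pd (1, 0) g x), sq_nonneg (pd (1, 0) f x),
    sq_nonneg (pd (0, 1) g x)]

theorem gradSq_curl {f g : ℝ × ℝ → ℝ} (hf : ContDiff ℝ ∞ f) (hg : ContDiff ℝ ∞ g)
    (hd : ∀ x, pd (1, 0) f x + pd (0, 1) g x = 0) (x : ℝ × ℝ) :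
    gradSq (curl f g) x = lap f x ^ 2 + lap g x ^ 2 := by
  rw [(lap_eq_pd_curl hf hg hd x).1, (lap_eq_pd_curl hf hg hd x).2]
  unfold gradSq
  ring

theorem mul_mul_abs_le_young {α β s : ℝ} (hα : 0 < α) (hβ : 0 < β) (hs : 0 ≤ s) (y V : ℝ) :
    y * s * |V| ≤ β * s + α * (y ^ 2 * s) ^ 2 + V ^ 4 / (64 * α * β ^ 2) := by
  have h1 : 0 ≤ s * (2 * β - y * |V|) ^ 2 / (4 * β) := by positivity
  have h2 : 0 ≤ (8 * α * β * (y ^ 2 * s) - |V| ^ 2) ^ 2 / (64 * α * β ^ 2) := by positivity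
  have e1 : s * (2 * β - y * |V|) ^ 2 / (4 * β) =
      β * s - y * s * |V| + y ^ 2 * s * |V| ^ 2 / (4 * β) := by field_simp; ring
  have e2 : (8 * α * β * (y ^ 2 * s) - |V| ^ 2) ^ 2 / (64 * α * β ^ 2) =
      α * (y ^ 2 * s) ^ 2 - y ^ 2 * s * |V| ^ 2 / (4 * β) + V ^ 4 / (64 * α * β ^ 2) := by
    rw [← Even.pow_abs (by decide : Even 4) V]
    field_simp; ring
  linarith

/-- The pointwise Young inequality behind the localised energy inequality. -/
theorem dissipation_le_aux {μ ν α β k z p q w j w1 w2 j1 j2 u1 u2 b1 b2 T gu gb : ℝ} (hμ : 0 ≤ μ)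
    (hν : 0 ≤ ν) (hα : 0 < α) (hβ : 0 < β) (hk : 0 ≤ k) (hz0 : 0 ≤ z) (hz1 : z ≤ 1)
    (hpq : p ^ 2 + q ^ 2 ≤ k ^ 2) (hgu : 0 ≤ gu) (hgb : 0 ≤ gb) (hwg : w ^ 2 ≤ 2 * gu)
    (hjg : j ^ 2 ≤ 2 * gb) :
    z ^ (3 + 1) * (μ * (w1 ^ 2 + w2 ^ 2) + ν * (j1 ^ 2 + j2 ^ 2)) ≤
      2 * (z ^ (3 + 1) * (μ * (w1 ^ 2 + w2 ^ 2) + ν * (j1 ^ 2 + j2 ^ 2) - T * j) +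
        (((3 : ℕ) : ℝ) + 1) * z ^ 3 *
          (p * (μ * (w * w1) + ν * (j * j1) + (w * j * b1 - 2⁻¹ * (w ^ 2 + j ^ 2) * u1)) +
            q * (μ * (w * w2) + ν * (j * j2) + (w * j * b2 - 2⁻¹ * (w ^ 2 + j ^ 2) * u2)))) +
      2 * (z ^ (3 + 1) * (T * j)) + 64 * α * (z ^ (7 + 1) * (gu + gb) ^ 2) +
      32 * (β + (μ + ν) * k ^ 2) * (gu + gb) +
      k ^ 4 / (16 * α * β ^ 2) * (z ^ (3 + 1) * (u1 ^ 4 + u2 ^ 4 + b1 ^ 4 + b2 ^ 4)) := by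
  set s := w ^ 2 + j ^ 2 with hs
  have hs0 : 0 ≤ s := by positivity
  have hsG : s ≤ 2 * (gu + gb) := by linarith
  have hp : |p| ≤ k := abs_le_of_sq_le_sq (by nlinarith [sq_nonneg q]) hk
  have hq : |q| ≤ k := abs_le_of_sq_le_sq (by nlinarith [sq_nonneg p]) hk
  have hwj : |w * j| ≤ 2⁻¹ * s := by
    rw [abs_mul]
    nlinarith [sq_nonneg (|w| - |j|), sq_abs w, sq_abs j]
  have young : ∀ r t U : ℝ, |r| ≤ k → |t| ≤ 2⁻¹ * s →
      8 * z ^ 3 * (r * (t * U)) ≤ 4 * (β * s + α * (z ^ 8 * s ^ 2) +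
        k ^ 4 * (z ^ 4 * U ^ 4) / (64 * α * β ^ 2)) := by
    intro r t U hr ht
    have y := mul_mul_abs_le_young hα hβ hs0 (z ^ 2) (z * k * U)
    rw [abs_mul, abs_of_nonneg (mul_nonneg hz0 hk)] at y
    have e : (z * k * U) ^ 4 = k ^ 4 * (z ^ 4 * U ^ 4) := by ring
    rw [e] at y
    have b : r * (t * U) ≤ k * (2⁻¹ * s * |U|) := by
      calc r * (t * U) ≤ |r * (t * U)| := le_abs_self _
        _ = |r| * (|t| * |U|) := by rw [abs_mul, abs_mul]
        _ ≤ _ := by gcongr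
    calc 8 * z ^ 3 * (r * (t * U)) ≤ 8 * z ^ 3 * (k * (2⁻¹ * s * |U|)) := by gcongr
      _ = 4 * (z ^ 2 * s * (z * k * |U|)) := by ring
      _ ≤ 4 * (β * s + α * ((z ^ 2) ^ 2 * s) ^ 2 +
        k ^ 4 * (z ^ 4 * U ^ 4) / (64 * α * β ^ 2)) := by gcongr
      _ = _ := by ring
  have t0 : |2⁻¹ * s| ≤ 2⁻¹ * s := (abs_of_nonneg (by positivity)).le
  have t1 : |-(w * j)| ≤ 2⁻¹ * s := by rwa [abs_neg]
  have y1 := young p (2⁻¹ * s) u1 hp t0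
  have y2 := young q (2⁻¹ * s) u2 hq t0
  have y3 := young p (-(w * j)) b1 hp t1
  have y4 := young q (-(w * j)) b2 hq t1
  have absorb : ∀ κ t t1 t2 : ℝ, 0 ≤ κ → -(8 * z ^ 3 * κ * (p * (t * t1) + q * (t * t2))) ≤
      z ^ 4 * (κ * (t1 ^ 2 + t2 ^ 2)) + 16 * (κ * (t ^ 2 * k ^ 2)) := by
    intro κ t t1 t2 hκ
    have a1 : 0 ≤ κ * (z ^ 2 * t1 + 4 * (z * p * t)) ^ 2 := by positivity
    have a2 : 0 ≤ κ * (z ^ 2 * t2 + 4 * (z * q * t)) ^ 2 := by positivity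
    have a3 : z ^ 2 * (p ^ 2 + q ^ 2) ≤ 1 * k ^ 2 := by
      gcongr
      exact pow_le_one₀ hz0 hz1
    have a4 : κ * t ^ 2 * (z ^ 2 * (p ^ 2 + q ^ 2)) ≤ κ * t ^ 2 * (1 * k ^ 2) := by gcongr
    linarith
  have d1 := absorb μ w w1 w2 hμ
  have d2 := absorb ν j j1 j2 hν
  have g1 : μ * (w ^ 2 * k ^ 2) ≤ μ * (2 * (gu + gb) * k ^ 2) := by gcongr; linarith
  have g2 : ν * (j ^ 2 * k ^ 2) ≤ ν * (2 * (gu + gb) * k ^ 2) := by gcongr; linarith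
  have g3 : β * s ≤ β * (2 * (gu + gb)) := by gcongr
  have g4 : α * (z ^ 8 * s ^ 2) ≤ α * (z ^ 8 * (2 * (gu + gb)) ^ 2) := by gcongr
  have eU : k ^ 4 / (16 * α * β ^ 2) * (z ^ (3 + 1) * (u1 ^ 4 + u2 ^ 4 + b1 ^ 4 + b2 ^ 4)) =
      4 * (k ^ 4 * (z ^ 4 * u1 ^ 4) / (64 * α * β ^ 2) +
        k ^ 4 * (z ^ 4 * u2 ^ 4) / (64 * α * β ^ 2) +
        k ^ 4 * (z ^ 4 * b1 ^ 4) / (64 * α * β ^ 2) +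
        k ^ 4 * (z ^ 4 * b2 ^ 4) / (64 * α * β ^ 2)) := by
    field_simp
    ring
  rw [eU]
  push_cast
  linarith

/-- The sum of all squared first derivatives. -/
noncomputable def energyDensity (u₁ u₂ b₁ b₂ : ℝ × ℝ → ℝ) (x : ℝ × ℝ) : ℝ :=
  gradSq u₁ x + gradSq u₂ x + (gradSq b₁ x + gradSq b₂ x)

theorem energyDensity_nonneg (u₁ u₂ b₁ b₂ : ℝ × ℝ → ℝ) (x : ℝ × ℝ) :
    0 ≤ energyDensity u₁ u₂ b₁ b₂ x :=
  add_nonneg (add_nonneg (gradSq_nonneg _ _) (gradSq_nonneg _ _))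
    (add_nonneg (gradSq_nonneg _ _) (gradSq_nonneg _ _))

@[fun_prop]
theorem ContDiff.energyDensity {u₁ u₂ b₁ b₂ : ℝ × ℝ → ℝ} (h₁ : ContDiff ℝ ∞ u₁)
    (h₂ : ContDiff ℝ ∞ u₂) (h₃ : ContDiff ℝ ∞ b₁) (h₄ : ContDiff ℝ ∞ b₂) :
    ContDiff ℝ ∞ (fun x => energyDensity u₁ u₂ b₁ b₂ x) := by
  unfold _root_.energyDensity
  fun_prop

namespace IsVorticityMHD

variable {μ ν : ℝ} {u₁ u₂ b₁ b₂ : ℝ × ℝ → ℝ}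

theorem integrable_energyDensity (h : IsVorticityMHD μ ν u₁ u₂ b₁ b₂) :
    Integrable (fun x => energyDensity u₁ u₂ b₁ b₂ x) :=
  (h.energy_u₁.add h.energy_u₂).add (h.energy_b₁.add h.energy_b₂)

/-- The dissipation density `μ|∇w|² + ν|∇j|²` is, up to `j` times the stretching term, the
divergence of a flux. -/
theorem div_flux (h : IsVorticityMHD μ ν u₁ u₂ b₁ b₂) : ∃ F₁ F₂ : ℝ × ℝ → ℝ,
    ContDiff ℝ ∞ F₁ ∧ ContDiff ℝ ∞ F₂ ∧
    (∀ x, F₁ x = μ * (curl u₁ u₂ x * pd (1, 0) (curl u₁ u₂) x) +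
      ν * (curl b₁ b₂ x * pd (1, 0) (curl b₁ b₂) x) +
      (curl u₁ u₂ x * curl b₁ b₂ x * b₁ x -
        2⁻¹ * (curl u₁ u₂ x ^ 2 + curl b₁ b₂ x ^ 2) * u₁ x)) ∧
    (∀ x, F₂ x = μ * (curl u₁ u₂ x * pd (0, 1) (curl u₁ u₂) x) +
      ν * (curl b₁ b₂ x * pd (0, 1) (curl b₁ b₂) x) +
      (curl u₁ u₂ x * curl b₁ b₂ x * b₂ x -
        2⁻¹ * (curl u₁ u₂ x ^ 2 + curl b₁ b₂ x ^ 2) * u₂ x)) ∧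
    ∀ x, pd (1, 0) F₁ x + pd (0, 1) F₂ x =
      μ * gradSq (curl u₁ u₂) x + ν * gradSq (curl b₁ b₂) x -
        stretch u₁ u₂ b₁ b₂ x * curl b₁ b₂ x := by
  have hw : ContDiff ℝ ∞ (curl u₁ u₂) := h.smooth_u₁.curl h.smooth_u₂
  have hj : ContDiff ℝ ∞ (curl b₁ b₂) := h.smooth_b₁.curl h.smooth_b₂
  have hF : ∀ v, ∀ f g : ℝ × ℝ → ℝ, ContDiff ℝ ∞ f → ContDiff ℝ ∞ g →
      ContDiff ℝ ∞ (fun x => μ * (curl u₁ u₂ x * pd v (curl u₁ u₂) x) +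
        ν * (curl b₁ b₂ x * pd v (curl b₁ b₂) x) + (curl u₁ u₂ x * curl b₁ b₂ x * g x -
        2⁻¹ * (curl u₁ u₂ x ^ 2 + curl b₁ b₂ x ^ 2) * f x)) := by
    intro v f g hf hg
    fun_prop
  have hpd : ∀ v, ∀ f g : ℝ × ℝ → ℝ, ContDiff ℝ ∞ f → ContDiff ℝ ∞ g → ∀ x,
      pd v (fun x => μ * (curl u₁ u₂ x * pd v (curl u₁ u₂) x) +
        ν * (curl b₁ b₂ x * pd v (curl b₁ b₂) x) + (curl u₁ u₂ x * curl b₁ b₂ x * g x -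
        2⁻¹ * (curl u₁ u₂ x ^ 2 + curl b₁ b₂ x ^ 2) * f x)) x =
      μ * (curl u₁ u₂ x * pd v (pd v (curl u₁ u₂)) x + pd v (curl u₁ u₂) x ^ 2) +
      ν * (curl b₁ b₂ x * pd v (pd v (curl b₁ b₂)) x + pd v (curl b₁ b₂) x ^ 2) +
      (curl u₁ u₂ x * curl b₁ b₂ x * pd v g x +
        (curl u₁ u₂ x * pd v (curl b₁ b₂) x + pd v (curl u₁ u₂) x * curl b₁ b₂ x) * g x -
       (2⁻¹ * (curl u₁ u₂ x ^ 2 + curl b₁ b₂ x ^ 2) * pd v f x +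
        (curl u₁ u₂ x * pd v (curl u₁ u₂) x + curl b₁ b₂ x * pd v (curl b₁ b₂) x) * f x)) := by
    intro v f g hf hg x
    have c2 : ContDiff ℝ ∞ (fun _ : ℝ × ℝ => (2⁻¹ : ℝ)) := contDiff_const
    have cμ : ContDiff ℝ ∞ (fun _ : ℝ × ℝ => μ) := contDiff_const
    have cν : ContDiff ℝ ∞ (fun _ : ℝ × ℝ => ν) := contDiff_const
    have m1 := hw.mul (hw.pd v)
    have m2 := hj.mul (hj.pd v)
    have m3 := hw.mul hj
    have m4 := (hw.pow 2).add (hj.pow 2)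
    rw [pd_add ((cμ.mul m1).add (cν.mul m2)) ((m3.mul hg).sub ((c2.mul m4).mul hf)),
      pd_add (cμ.mul m1) (cν.mul m2), pd_sub (m3.mul hg) ((c2.mul m4).mul hf),
      pd_mul cμ m1, pd_mul cν m2, pd_mul hw (hw.pd v), pd_mul hj (hj.pd v), pd_mul m3 hg,
      pd_mul hw hj, pd_mul (c2.mul m4) hf, pd_mul c2 m4, pd_add (hw.pow 2) (hj.pow 2),
      pd_pow hw, pd_pow hj]
    simp only [pd_const]
    push_cast
    ring
  refine ⟨_, _, hF (1, 0) u₁ b₁ h.smooth_u₁ h.smooth_b₁, hF (0, 1) u₂ b₂ h.smooth_u₂ h.smooth_b₂,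
    fun _ => rfl, fun _ => rfl, fun x => ?_⟩
  rw [hpd _ _ _ h.smooth_u₁ h.smooth_b₁, hpd _ _ _ h.smooth_u₂ h.smooth_b₂]
  have e1 := h.vorticity x
  have e2 := h.current x
  have e3 := h.div_u x
  have e4 := h.div_b x
  unfold lap at e1 e2
  unfold gradSq
  linear_combination curl u₁ u₂ x * e1 + curl b₁ b₂ x * e2 +
    curl u₁ u₂ x * curl b₁ b₂ x * e4 - 2⁻¹ * (curl u₁ u₂ x ^ 2 + curl b₁ b₂ x ^ 2) * e3

/-- The localised energy inequality for the vorticity and the current. -/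
theorem integral_cutoff_dissipation_le (h : IsVorticityMHD μ ν u₁ u₂ b₁ b₂) {R K α β M : ℝ}
    (hR : 0 < R) (hK : 0 ≤ K) (hc : ∀ x, gradSq (cutoff R) x ≤ (K / R) ^ 2)
    (hα : 0 < α) (hβ : 0 < β)
    (hM : ∫ x, cutoff R x ^ 4 * (u₁ x ^ 4 + u₂ x ^ 4 + b₁ x ^ 4 + b₂ x ^ 4) ≤ M * R ^ 3) :
    ∫ x, cutoff R x ^ 4 * (μ * gradSq (curl u₁ u₂) x + ν * gradSq (curl b₁ b₂) x) ≤
      2 * (∫ x, cutoff R x ^ 4 * (stretch u₁ u₂ b₁ b₂ x * curl b₁ b₂ x)) +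
        64 * α * (∫ x, cutoff R x ^ 8 * energyDensity u₁ u₂ b₁ b₂ x ^ 2) +
        32 * (β + (μ + ν) * (K / R) ^ 2) * (∫ x, energyDensity u₁ u₂ b₁ b₂ x) +
        K ^ 4 * M / (16 * α * β ^ 2) / R := by
  obtain ⟨F₁, F₂, s₁, s₂, eF₁, eF₂, hdiv⟩ := h.div_flux
  have hμ := h.μ_pos
  have hν := h.ν_pos
  have h1 := h.smooth_u₁
  have h2 := h.smooth_u₂
  have h3 := h.smooth_b₁
  have h4 := h.smooth_b₂
  have hζ : ContDiff ℝ ∞ (cutoff R) := contDiff_cutoff R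
  have hw : ContDiff ℝ ∞ (curl u₁ u₂) := h1.curl h2
  have hj : ContDiff ℝ ∞ (curl b₁ b₂) := h3.curl h4
  have hG := h1.energyDensity h2 h3 h4
  obtain ⟨hi, h0⟩ := integral_cutoff_mul_div_eq_zero hR 3 s₁ s₂
  have iP := integrable_cutoff_pow_mul hR 3
    (F := fun x => μ * gradSq (curl u₁ u₂) x + ν * gradSq (curl b₁ b₂) x) (by fun_prop)
  have iT := integrable_cutoff_pow_mul hR 3
    (F := fun x => stretch u₁ u₂ b₁ b₂ x * curl b₁ b₂ x) (by fun_prop)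
  have iG2 := integrable_cutoff_pow_mul hR 7
    (F := fun x => energyDensity u₁ u₂ b₁ b₂ x ^ 2) (by fun_prop)
  have iU := integrable_cutoff_pow_mul hR 3
    (F := fun x => u₁ x ^ 4 + u₂ x ^ 4 + b₁ x ^ 4 + b₂ x ^ 4) (by fun_prop)
  have iG := h.integrable_energyDensity
  have hmono := integral_mono iP (((((hi.const_mul 2).add (iT.const_mul 2)).add
    (iG2.const_mul (64 * α))).add (iG.const_mul (32 * (β + (μ + ν) * (K / R) ^ 2)))).add
      (iU.const_mul ((K / R) ^ 4 / (16 * α * β ^ 2)))) (fun x => by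
      simp only [Pi.add_apply]
      rw [hdiv, eF₁, eF₂]
      have hcx := hc x
      have hz0 := cutoff_nonneg R x
      have hz1 := cutoff_le_one R x
      have hcu := curl_sq_le u₁ u₂ x
      have hcb := curl_sq_le b₁ b₂ x
      have hgu := add_nonneg (gradSq_nonneg u₁ x) (gradSq_nonneg u₂ x)
      have hgb := add_nonneg (gradSq_nonneg b₁ x) (gradSq_nonneg b₂ x)
      unfold energyDensity
      rw [gradSq] at hcx
      rw [gradSq.eq_def (curl u₁ u₂), gradSq.eq_def (curl b₁ b₂)]
      exact dissipation_le_aux hμ.le hν.le hα hβ (div_nonneg hK hR.le) hz0 hz1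
        hcx hgu hgb hcu hcb)
  rw [integral_add' ((((hi.const_mul 2).add (iT.const_mul 2)).add
    (iG2.const_mul (64 * α))).add (iG.const_mul (32 * (β + (μ + ν) * (K / R) ^ 2))))
      (iU.const_mul ((K / R) ^ 4 / (16 * α * β ^ 2))),
    integral_add' (((hi.const_mul 2).add (iT.const_mul 2)).add
    (iG2.const_mul (64 * α))) (iG.const_mul (32 * (β + (μ + ν) * (K / R) ^ 2))),
    integral_add' ((hi.const_mul 2).add (iT.const_mul 2)) (iG2.const_mul (64 * α)),
    integral_add' (hi.const_mul 2) (iT.const_mul 2), integral_const_mul, integral_const_mul,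
    integral_const_mul, integral_const_mul, integral_const_mul, h0] at hmono
  have hU : (K / R) ^ 4 / (16 * α * β ^ 2) *
      (∫ x, cutoff R x ^ 4 * (u₁ x ^ 4 + u₂ x ^ 4 + b₁ x ^ 4 + b₂ x ^ 4)) ≤
      K ^ 4 * M / (16 * α * β ^ 2) / R := by
    calc _ ≤ (K / R) ^ 4 / (16 * α * β ^ 2) * (M * R ^ 3) := by gcongr
      _ = _ := by field_simp
  linarith

end IsVorticityMHD

/-- The sum of all squared second derivatives. -/
noncomputable def hessDensity (u₁ u₂ b₁ b₂ : ℝ × ℝ → ℝ) (x : ℝ × ℝ) : ℝ :=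
  hessSq u₁ x + hessSq u₂ x + (hessSq b₁ x + hessSq b₂ x)

theorem hessDensity_nonneg (u₁ u₂ b₁ b₂ : ℝ × ℝ → ℝ) (x : ℝ × ℝ) :
    0 ≤ hessDensity u₁ u₂ b₁ b₂ x :=
  add_nonneg (add_nonneg (hessSq_nonneg _ _) (hessSq_nonneg _ _))
    (add_nonneg (hessSq_nonneg _ _) (hessSq_nonneg _ _))

@[fun_prop]
theorem ContDiff.hessDensity {u₁ u₂ b₁ b₂ : ℝ × ℝ → ℝ} (h₁ : ContDiff ℝ ∞ u₁)
    (h₂ : ContDiff ℝ ∞ u₂) (h₃ : ContDiff ℝ ∞ b₁) (h₄ : ContDiff ℝ ∞ b₂) :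
    ContDiff ℝ ∞ (fun x => hessDensity u₁ u₂ b₁ b₂ x) := by
  unfold _root_.hessDensity
  fun_prop

theorem integral_add_add_add {f₁ f₂ f₃ f₄ : ℝ × ℝ → ℝ} (h₁ : Integrable f₁) (h₂ : Integrable f₂)
    (h₃ : Integrable f₃) (h₄ : Integrable f₄) :
    ∫ x, (f₁ x + f₂ x + (f₃ x + f₄ x)) =
      (∫ x, f₁ x) + (∫ x, f₂ x) + ((∫ x, f₃ x) + ∫ x, f₄ x) :=
  (integral_add (h₁.add h₂) (h₃.add h₄)).trans
    (congrArg₂ _ (integral_add h₁ h₂) (integral_add h₃ h₄))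

theorem integrable_pd_sq {f : ℝ × ℝ → ℝ} (hf : ContDiff ℝ ∞ f)
    (hg : Integrable (fun x => gradSq f x)) :
    Integrable (fun x => pd (1, 0) f x ^ 2) ∧ Integrable (fun x => pd (0, 1) f x ^ 2) := by
  constructor
  · refine hg.mono' ((hf.pd _).pow 2).continuous.aestronglyMeasurable (.of_forall fun x => ?_)
    rw [norm_of_nonneg (sq_nonneg _)]
    unfold gradSq
    linarith [sq_nonneg (pd (0, 1) f x)]
  · refine hg.mono' ((hf.pd _).pow 2).continuous.aestronglyMeasurable (.of_forall fun x => ?_)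
    rw [norm_of_nonneg (sq_nonneg _)]
    unfold gradSq
    linarith [sq_nonneg (pd (1, 0) f x)]

/-- The localised Ladyzhenskaya inequality for a gradient. -/
theorem exists_integral_cutoff_gradSq_sq_le : ∃ C : ℝ, 0 < C ∧ ∀ (f : ℝ × ℝ → ℝ), ContDiff ℝ ∞ f →
    Integrable (fun x => gradSq f x) → ∀ (R k : ℝ), 0 < R →
    (∀ x, gradSq (cutoff R) x ≤ (k / R) ^ 2) →
    ∫ x, cutoff R x ^ 8 * gradSq f x ^ 2 ≤ C * (∫ x, gradSq f x) *
      ((∫ x, cutoff R x ^ 4 * hessSq f x) + (k / R) ^ 2 * ∫ x, gradSq f x) := by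
  obtain ⟨C, hC, h⟩ := exists_ladyzhenskaya_cutoff
  refine ⟨16 * C, by positivity, fun f hf hg R k hR hc => ?_⟩
  obtain ⟨i1, i2⟩ := integrable_pd_sq hf hg
  have d : ∀ v, Integrable (fun x => pd v f x ^ 2) → ∫ x, cutoff R x ^ 8 * pd v f x ^ 4 ≤
      C * (∫ x, pd v f x ^ 2) *
        (2 * (∫ x, cutoff R x ^ 4 * gradSq (pd v f) x) +
          8 * ((k / R) ^ 2 * ∫ x, pd v f x ^ 2)) := by
    intro v iv
    have h1 := h (pd v f) (hf.pd v) R hR 1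
    norm_num at h1
    have h2 := integral_cutoff_pow_mul_le hR 3 ((hf.pd v).pow 2) (fun x => sq_nonneg _) iv
    have h3 := integral_mul_gradSq_cutoff_le hR (c := k ^ 2) (by simpa only [div_pow] using hc)
      ((hf.pd v).pow 2) (fun x => sq_nonneg _) iv 2
    rw [← div_pow] at h3
    have n1 : 0 ≤ ∫ x, cutoff R x ^ 4 * gradSq (pd v f) x :=
      integral_nonneg fun x => mul_nonneg (by positivity) (gradSq_nonneg _ _)
    have n2 : 0 ≤ ∫ x, cutoff R x ^ 2 * pd v f x ^ 2 * gradSq (cutoff R) x :=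
      integral_nonneg fun x => mul_nonneg (by positivity) (gradSq_nonneg _ _)
    have n3 : 0 ≤ ∫ x, pd v f x ^ 2 := integral_nonneg fun x => sq_nonneg _
    refine h1.trans ?_
    gcongr
  have h1 := d (1, 0) i1
  have h2 := d (0, 1) i2
  have d1 := hf.pd (1, 0)
  have d2 := hf.pd (0, 1)
  have j1 : Integrable (fun x => cutoff R x ^ 8 * pd (1, 0) f x ^ 4) :=
    integrable_cutoff_pow_mul hR 7 (d1.pow 4)
  have j2 : Integrable (fun x => cutoff R x ^ 8 * pd (0, 1) f x ^ 4) :=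
    integrable_cutoff_pow_mul hR 7 (d2.pow 4)
  have k1 := integrable_cutoff_pow_mul hR 3 d1.gradSq
  have k2 := integrable_cutoff_pow_mul hR 3 d2.gradSq
  have e1 : ∫ x, gradSq f x = (∫ x, pd (1, 0) f x ^ 2) + ∫ x, pd (0, 1) f x ^ 2 :=
    integral_add i1 i2
  have e2 : ∫ x, cutoff R x ^ 4 * hessSq f x = (∫ x, cutoff R x ^ 4 * gradSq (pd (1, 0) f) x) +
      ∫ x, cutoff R x ^ 4 * gradSq (pd (0, 1) f) x := by
    rw [← integral_add k1 k2]
    exact integral_congr_ae (.of_forall fun x => mul_add _ _ _)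
  have e3 : ∫ x, cutoff R x ^ 8 * gradSq f x ^ 2 ≤ 2 * ((∫ x, cutoff R x ^ 8 * pd (1, 0) f x ^ 4) +
      ∫ x, cutoff R x ^ 8 * pd (0, 1) f x ^ 4) := by
    rw [← integral_add j1 j2, ← integral_const_mul]
    refine integral_mono (integrable_cutoff_pow_mul hR 7 (hf.gradSq.pow 2))
      ((j1.add j2).const_mul 2) fun x => ?_
    have hz : 0 ≤ cutoff R x ^ 8 := by have := cutoff_nonneg R x; positivity
    have := mul_nonneg hz (sq_nonneg (pd (1, 0) f x ^ 2 - pd (0, 1) f x ^ 2))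
    simp only [gradSq]
    linarith
  have n1 : 0 ≤ ∫ x, cutoff R x ^ 4 * gradSq (pd (1, 0) f) x :=
    integral_nonneg fun x => mul_nonneg (by positivity) (gradSq_nonneg _ _)
  have n2 : 0 ≤ ∫ x, cutoff R x ^ 4 * gradSq (pd (0, 1) f) x :=
    integral_nonneg fun x => mul_nonneg (by positivity) (gradSq_nonneg _ _)
  have m1 : 0 ≤ ∫ x, pd (1, 0) f x ^ 2 := integral_nonneg fun x => sq_nonneg _
  have m2 : 0 ≤ ∫ x, pd (0, 1) f x ^ 2 := integral_nonneg fun x => sq_nonneg _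
  rw [e1, e2]
  set A := ∫ x, pd (1, 0) f x ^ 2
  set B := ∫ x, pd (0, 1) f x ^ 2
  set X := ∫ x, cutoff R x ^ 4 * gradSq (pd (1, 0) f) x
  set Y := ∫ x, cutoff R x ^ 4 * gradSq (pd (0, 1) f) x
  set κ := (k / R) ^ 2
  have hκ : 0 ≤ κ := sq_nonneg _
  have q1 : C * A * (2 * X + 8 * (κ * A)) ≤ C * A * (8 * (X + Y + κ * (A + B))) := by
    gcongr
    nlinarith [mul_nonneg hκ m2]
  have q2 : C * B * (2 * Y + 8 * (κ * B)) ≤ C * B * (8 * (X + Y + κ * (A + B))) := by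
    gcongr
    nlinarith [mul_nonneg hκ m1]
  linarith

/-- The localised Ladyzhenskaya inequality for the energy density. -/
theorem exists_integral_cutoff_energyDensity_sq_le : ∃ C : ℝ, 0 < C ∧
    ∀ (μ ν : ℝ) (u₁ u₂ b₁ b₂ : ℝ × ℝ → ℝ), IsVorticityMHD μ ν u₁ u₂ b₁ b₂ →
    ∀ (R k : ℝ), 0 < R → (∀ x, gradSq (cutoff R) x ≤ (k / R) ^ 2) →
    ∫ x, cutoff R x ^ 8 * energyDensity u₁ u₂ b₁ b₂ x ^ 2 ≤
      C * (∫ x, energyDensity u₁ u₂ b₁ b₂ x) *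
      ((∫ x, cutoff R x ^ 4 * hessDensity u₁ u₂ b₁ b₂ x) +
        (k / R) ^ 2 * ∫ x, energyDensity u₁ u₂ b₁ b₂ x) := by
  obtain ⟨C, hC, hL⟩ := exists_integral_cutoff_gradSq_sq_le
  refine ⟨4 * C, by positivity, fun μ ν u₁ u₂ b₁ b₂ h R k hR hc => ?_⟩
  have s1 := h.smooth_u₁
  have s2 := h.smooth_u₂
  have s3 := h.smooth_b₁
  have s4 := h.smooth_b₂
  have l1 := hL u₁ s1 h.energy_u₁ R k hR hc
  have l2 := hL u₂ s2 h.energy_u₂ R k hR hc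
  have l3 := hL b₁ s3 h.energy_b₁ R k hR hc
  have l4 := hL b₂ s4 h.energy_b₂ R k hR hc
  have i : ∀ {f}, ContDiff ℝ ∞ f → Integrable (fun x => cutoff R x ^ 8 * gradSq f x ^ 2) :=
    fun hf => integrable_cutoff_pow_mul hR 7 (hf.gradSq.pow 2)
  have ih : ∀ {f}, ContDiff ℝ ∞ f → Integrable (fun x => cutoff R x ^ 4 * hessSq f x) :=
    fun hf => integrable_cutoff_pow_mul hR 3 hf.hessSq
  have n1 : ∀ f, 0 ≤ ∫ x, gradSq f x := fun f => integral_nonneg fun x => gradSq_nonneg f x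
  have n2 : ∀ f, 0 ≤ ∫ x, cutoff R x ^ 4 * hessSq f x := fun f =>
    integral_nonneg fun x => mul_nonneg (by positivity) (hessSq_nonneg f x)
  have e1 : ∫ x, energyDensity u₁ u₂ b₁ b₂ x = _ :=
    integral_add_add_add h.energy_u₁ h.energy_u₂ h.energy_b₁ h.energy_b₂
  have e2 : ∫ x, cutoff R x ^ 4 * hessDensity u₁ u₂ b₁ b₂ x = _ :=
    (integral_congr_ae (.of_forall fun x => by simp only [hessDensity]; ring)).trans
      (integral_add_add_add (ih s1) (ih s2) (ih s3) (ih s4))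
  have e3 : ∫ x, cutoff R x ^ 8 * energyDensity u₁ u₂ b₁ b₂ x ^ 2 ≤
      4 * ((∫ x, cutoff R x ^ 8 * gradSq u₁ x ^ 2) + (∫ x, cutoff R x ^ 8 * gradSq u₂ x ^ 2) +
        ((∫ x, cutoff R x ^ 8 * gradSq b₁ x ^ 2) + ∫ x, cutoff R x ^ 8 * gradSq b₂ x ^ 2)) := by
    rw [← integral_add_add_add (i s1) (i s2) (i s3) (i s4), ← integral_const_mul]
    refine integral_mono
      (integrable_cutoff_pow_mul hR 7 ((s1.energyDensity s2 s3 s4).pow 2))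
      ((((i s1).add (i s2)).add ((i s3).add (i s4))).const_mul 4) fun x => ?_
    have hz : 0 ≤ cutoff R x ^ 8 := by have := cutoff_nonneg R x; positivity
    have hsq : energyDensity u₁ u₂ b₁ b₂ x ^ 2 ≤ 4 * (gradSq u₁ x ^ 2 + gradSq u₂ x ^ 2 +
        (gradSq b₁ x ^ 2 + gradSq b₂ x ^ 2)) := by
      unfold energyDensity
      nlinarith [sq_nonneg (gradSq u₁ x - gradSq u₂ x), sq_nonneg (gradSq b₁ x - gradSq b₂ x),
        sq_nonneg (gradSq u₁ x + gradSq u₂ x - (gradSq b₁ x + gradSq b₂ x))]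
    have := mul_le_mul_of_nonneg_left hsq hz
    simp only
    linarith
  rw [e1, e2]
  have a1 := n1 u₁
  have a2 := n1 u₂
  have a3 := n1 b₁
  have a4 := n1 b₂
  have c1 := n2 u₁
  have c2 := n2 u₂
  have c3 := n2 b₁
  have c4 := n2 b₂
  set A1 := ∫ x, gradSq u₁ x
  set A2 := ∫ x, gradSq u₂ x
  set A3 := ∫ x, gradSq b₁ x
  set A4 := ∫ x, gradSq b₂ x
  set H1 := ∫ x, cutoff R x ^ 4 * hessSq u₁ x
  set H2 := ∫ x, cutoff R x ^ 4 * hessSq u₂ x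
  set H3 := ∫ x, cutoff R x ^ 4 * hessSq b₁ x
  set H4 := ∫ x, cutoff R x ^ 4 * hessSq b₂ x
  set κ := (k / R) ^ 2
  have hκ : 0 ≤ κ := sq_nonneg _
  have q : ∀ A H : ℝ, 0 ≤ A → A ≤ A1 + A2 + (A3 + A4) → H ≤ H1 + H2 + (H3 + H4) →
      C * A * (H + κ * A) ≤ C * A * (H1 + H2 + (H3 + H4) + κ * (A1 + A2 + (A3 + A4))) := by
    intro A H hA hA' hH
    gcongr
  have q1 := q A1 H1 a1 (by linarith) (by linarith)
  have q2 := q A2 H2 a2 (by linarith) (by linarith)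
  have q3 := q A3 H3 a3 (by linarith) (by linarith)
  have q4 := q A4 H4 a4 (by linarith) (by linarith)
  linarith

/-- The localised Hessian is controlled by the localised dissipation. -/
theorem IsVorticityMHD.integral_cutoff_hessDensity_le {μ ν : ℝ} {u₁ u₂ b₁ b₂ : ℝ × ℝ → ℝ}
    (h : IsVorticityMHD μ ν u₁ u₂ b₁ b₂) {R k : ℝ} (hR : 0 < R)
    (hc : ∀ x, gradSq (cutoff R) x ≤ (k / R) ^ 2) :
    min μ ν * (∫ x, cutoff R x ^ 4 * hessDensity u₁ u₂ b₁ b₂ x) ≤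
      2 * (∫ x, cutoff R x ^ 4 *
        (μ * gradSq (curl u₁ u₂) x + ν * gradSq (curl b₁ b₂) x)) +
      32 * min μ ν * ((k / R) ^ 2 * ∫ x, energyDensity u₁ u₂ b₁ b₂ x) := by
  have s1 := h.smooth_u₁
  have s2 := h.smooth_u₂
  have s3 := h.smooth_b₁
  have s4 := h.smooth_b₂
  have hm : 0 < min μ ν := lt_min h.μ_pos h.ν_pos
  have hw : ContDiff ℝ ∞ (curl u₁ u₂) := s1.curl s2
  have hj : ContDiff ℝ ∞ (curl b₁ b₂) := s3.curl s4
  have ih : ∀ {f}, ContDiff ℝ ∞ f → Integrable (fun x => cutoff R x ^ 4 * hessSq f x) :=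
    fun hf => integrable_cutoff_pow_mul hR 3 hf.hessSq
  have il : ∀ {f}, ContDiff ℝ ∞ f → Integrable (fun x => cutoff R x ^ 4 * lap f x ^ 2) :=
    fun hf => integrable_cutoff_pow_mul hR 3 (hf.lap.pow 2)
  have hc' : ∀ x, gradSq (cutoff R) x ≤ k ^ 2 / R ^ 2 := by simpa only [div_pow] using hc
  have l1 := integral_cutoff_hessSq_le hR hc' s1 h.energy_u₁
  have l2 := integral_cutoff_hessSq_le hR hc' s2 h.energy_u₂
  have l3 := integral_cutoff_hessSq_le hR hc' s3 h.energy_b₁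
  have l4 := integral_cutoff_hessSq_le hR hc' s4 h.energy_b₂
  rw [← div_pow] at l1 l2 l3 l4
  have e1 : ∫ x, energyDensity u₁ u₂ b₁ b₂ x = _ :=
    integral_add_add_add h.energy_u₁ h.energy_u₂ h.energy_b₁ h.energy_b₂
  have e2 : ∫ x, cutoff R x ^ 4 * hessDensity u₁ u₂ b₁ b₂ x = _ :=
    (integral_congr_ae (.of_forall fun x => by simp only [hessDensity]; ring)).trans
      (integral_add_add_add (ih s1) (ih s2) (ih s3) (ih s4))
  have e3 : min μ ν * ((∫ x, cutoff R x ^ 4 * lap u₁ x ^ 2) + (∫ x, cutoff R x ^ 4 * lap u₂ x ^ 2) +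
      ((∫ x, cutoff R x ^ 4 * lap b₁ x ^ 2) + ∫ x, cutoff R x ^ 4 * lap b₂ x ^ 2)) ≤
      ∫ x, cutoff R x ^ 4 * (μ * gradSq (curl u₁ u₂) x + ν * gradSq (curl b₁ b₂) x) := by
    rw [← integral_add_add_add (il s1) (il s2) (il s3) (il s4), ← integral_const_mul]
    refine integral_mono ((((il s1).add (il s2)).add ((il s3).add (il s4))).const_mul _)
      (integrable_cutoff_pow_mul hR 3 (by fun_prop)) fun x => ?_
    have hz : 0 ≤ cutoff R x ^ 4 := by positivity
    have g1 := mul_le_mul_of_nonneg_right (min_le_left μ ν) (gradSq_nonneg (curl u₁ u₂) x)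
    have g2 := mul_le_mul_of_nonneg_right (min_le_right μ ν) (gradSq_nonneg (curl b₁ b₂) x)
    have := mul_le_mul_of_nonneg_left (add_le_add g1 g2) hz
    simp only
    rw [gradSq_curl s1 s2 h.div_u, gradSq_curl s3 s4 h.div_b] at this ⊢
    linarith
  rw [e1, e2]
  nlinarith

/-- A uniform choice of constants for the cut-offs and the growth of a solution. -/
theorem IsVorticityMHD.exists_cutoff_bounds {μ ν : ℝ} {u₁ u₂ b₁ b₂ : ℝ × ℝ → ℝ}
    (h : IsVorticityMHD μ ν u₁ u₂ b₁ b₂) : ∃ K M : ℝ, 0 ≤ K ∧ 0 ≤ M ∧ ∀ R, 1 ≤ R →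
      (∀ x, gradSq (cutoff R) x ≤ (K / R) ^ 2) ∧
      ∫ x, cutoff R x ^ 4 * (u₁ x ^ 4 + u₂ x ^ 4 + b₁ x ^ 4 + b₂ x ^ 4) ≤ M * R ^ 3 := by
  obtain ⟨c, hc0, hc⟩ := exists_pd_cutoff_sq_le
  obtain ⟨M1, n1, m1⟩ := exists_integral_cutoff_pow_four_le h.smooth_u₁ h.energy_u₁
  obtain ⟨M2, n2, m2⟩ := exists_integral_cutoff_pow_four_le h.smooth_u₂ h.energy_u₂
  obtain ⟨M3, n3, m3⟩ := exists_integral_cutoff_pow_four_le h.smooth_b₁ h.energy_b₁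
  obtain ⟨M4, n4, m4⟩ := exists_integral_cutoff_pow_four_le h.smooth_b₂ h.energy_b₂
  refine ⟨√c, M1 + M2 + (M3 + M4), sqrt_nonneg c, by positivity, fun R hR => ?_⟩
  have hR0 : 0 < R := by linarith
  refine ⟨fun x => ?_, ?_⟩
  · rw [div_pow, sq_sqrt hc0.le]
    exact hc R hR0 x
  · have i : ∀ {f}, ContDiff ℝ ∞ f → Integrable (fun x => cutoff R x ^ 4 * f x ^ 4) :=
      fun hf => integrable_cutoff_pow_mul hR0 3 (hf.pow 4)
    have e : ∫ x, cutoff R x ^ 4 * (u₁ x ^ 4 + u₂ x ^ 4 + b₁ x ^ 4 + b₂ x ^ 4) = _ :=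
      (integral_congr_ae (.of_forall fun x => by ring)).trans (integral_add_add_add
        (i h.smooth_u₁) (i h.smooth_u₂) (i h.smooth_b₁) (i h.smooth_b₂))
    rw [e]
    have := m1 R hR
    have := m2 R hR
    have := m3 R hR
    have := m4 R hR
    linarith

theorem two_mul_stretch_mul_curl_le (u₁ u₂ b₁ b₂ : ℝ × ℝ → ℝ) {α : ℝ} (hα : 0 < α)
    (z : ℝ) (x : ℝ × ℝ) :
    2 * (z ^ 4 * (stretch u₁ u₂ b₁ b₂ x * curl b₁ b₂ x)) ≤
      α * (z ^ 8 * energyDensity u₁ u₂ b₁ b₂ x ^ 2) + 2 / α * energyDensity u₁ u₂ b₁ b₂ x := by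
  have h1 := stretch_sq_le u₁ u₂ b₁ b₂ x
  have h2 := curl_sq_le b₁ b₂ x
  have hu := add_nonneg (gradSq_nonneg u₁ x) (gradSq_nonneg u₂ x)
  unfold energyDensity
  set gu := gradSq u₁ x + gradSq u₂ x
  set gb := gradSq b₁ x + gradSq b₂ x
  set T := stretch u₁ u₂ b₁ b₂ x
  set j := curl b₁ b₂ x
  have h3 : T ^ 2 ≤ (gu + gb) ^ 2 := by nlinarith [sq_nonneg (gu - gb)]
  have h4 : α * (z ^ 8 * T ^ 2) ≤ α * (z ^ 8 * (gu + gb) ^ 2) := by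
    have : 0 ≤ z ^ 8 := by positivity
    gcongr
  have h5 : j ^ 2 / α ≤ 2 * (gu + gb) / α := by gcongr; linarith
  have h6 : 0 ≤ (α * (z ^ 4 * T) - j) ^ 2 / α := by positivity
  have h7 : (α * (z ^ 4 * T) - j) ^ 2 / α =
      α * (z ^ 8 * T ^ 2) - 2 * (z ^ 4 * (T * j)) + j ^ 2 / α := by
    field_simp
    ring
  have h8 : 2 / α * (gu + gb) = 2 * (gu + gb) / α := by ring
  linarith

/-- Solutions with finite Dirichlet energy have square-integrable second derivatives. -/
theorem IsVorticityMHD.integrable_hessDensity {μ ν : ℝ} {u₁ u₂ b₁ b₂ : ℝ × ℝ → ℝ}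
    (h : IsVorticityMHD μ ν u₁ u₂ b₁ b₂) : Integrable (fun x => hessDensity u₁ u₂ b₁ b₂ x) := by
  obtain ⟨C, hC, hL⟩ := exists_integral_cutoff_energyDensity_sq_le
  obtain ⟨K, M, hK, hM0, hKM⟩ := h.exists_cutoff_bounds
  have s1 := h.smooth_u₁
  have s2 := h.smooth_u₂
  have s3 := h.smooth_b₁
  have s4 := h.smooth_b₂
  have hμ := h.μ_pos
  have hν := h.ν_pos
  have iG := h.integrable_energyDensity
  set E := ∫ x, energyDensity u₁ u₂ b₁ b₂ x with hE
  have hE0 : 0 ≤ E := integral_nonneg fun x => energyDensity_nonneg _ _ _ _ x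
  set m := min μ ν with hm
  have hm0 : 0 < m := lt_min hμ hν
  set L := C * E + 1 with hLdef
  have hL0 : 0 < L := by positivity
  set α := m / (260 * L) with hα
  have hα0 : 0 < α := by positivity
  have hαL : 260 * (α * L) = m := by rw [hα]; field_simp
  refine (integrable_of_integral_cutoff_le (s1.hessDensity s2 s3 s4).continuous
    (fun x => hessDensity_nonneg _ _ _ _ x) 3
    (B := fun _ => 2 / m * (65 * α * (L * (K ^ 2 * E)) + 2 * α⁻¹ * E +
      32 * (1 + (μ + ν) * K ^ 2) * E + K ^ 4 * M / (16 * α) + 16 * m * (K ^ 2 * E)) * 2)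
    tendsto_const_nhds fun R hR => ?_).1
  have hR0 : 0 < R := by linarith
  obtain ⟨hc, hM⟩ := hKM R hR
  have hκ : (K / R) ^ 2 ≤ K ^ 2 := by
    gcongr
    exact div_le_self hK hR
  have a1 := h.integral_cutoff_hessDensity_le hR0 hc
  have a2 := h.integral_cutoff_dissipation_le hR0 hK hc hα0 one_pos hM
  have a3 := hL μ ν u₁ u₂ b₁ b₂ h R K hR0 hc
  have a4 : 2 * (∫ x, cutoff R x ^ 4 * (stretch u₁ u₂ b₁ b₂ x * curl b₁ b₂ x)) ≤
      α * (∫ x, cutoff R x ^ 8 * energyDensity u₁ u₂ b₁ b₂ x ^ 2) + 2 / α * E := by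
    have i1 := integrable_cutoff_pow_mul hR0 3
      (F := fun x => stretch u₁ u₂ b₁ b₂ x * curl b₁ b₂ x) (by fun_prop)
    have i2 := integrable_cutoff_pow_mul hR0 7 ((s1.energyDensity s2 s3 s4).pow 2)
    rw [hE, ← integral_const_mul, ← integral_const_mul, ← integral_const_mul,
      ← integral_add (i2.const_mul α) (iG.const_mul _)]
    exact integral_mono (i1.const_mul 2) ((i2.const_mul α).add (iG.const_mul _))
      fun x => two_mul_stretch_mul_curl_le u₁ u₂ b₁ b₂ hα0 (cutoff R x) x
  have hH0 : 0 ≤ ∫ x, cutoff R x ^ 4 * hessDensity u₁ u₂ b₁ b₂ x :=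
    integral_nonneg fun x => mul_nonneg (by positivity) (hessDensity_nonneg _ _ _ _ x)
  simp only [Nat.succ_eq_add_one, Nat.reduceAdd]
  rw [← hE] at a1 a2 a3
  set H := ∫ x, cutoff R x ^ 4 * hessDensity u₁ u₂ b₁ b₂ x
  set Q := ∫ x, cutoff R x ^ 8 * energyDensity u₁ u₂ b₁ b₂ x ^ 2
  set P := ∫ x, cutoff R x ^ 4 * (μ * gradSq (curl u₁ u₂) x + ν * gradSq (curl b₁ b₂) x)
  set κ := (K / R) ^ 2
  have hκ0 : 0 ≤ κ := sq_nonneg _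
  have b1 : m * H ≤ 2 * P + 32 * m * (K ^ 2 * E) := by
    refine a1.trans ?_
    gcongr
  have b2 : Q ≤ L * (H + K ^ 2 * E) := by
    refine a3.trans ?_
    gcongr
    linarith
  have b3 : 32 * (1 + (μ + ν) * κ) * E ≤ 32 * (1 + (μ + ν) * K ^ 2) * E := by gcongr
  have b4 : K ^ 4 * M / (16 * α * 1 ^ 2) / R ≤ K ^ 4 * M / (16 * α) := by
    rw [one_pow, mul_one]
    exact div_le_self (by positivity) hR
  have b5 : 65 * α * Q ≤ 65 * α * (L * (H + K ^ 2 * E)) := by gcongr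
  have b6 : 65 * α * (L * (H + K ^ 2 * E)) = m / 4 * H + 65 * α * (L * (K ^ 2 * E)) := by
    rw [← hαL]; ring
  rw [div_eq_mul_inv 2 α] at a4
  have b7 : m * H ≤ 4 * (65 * α * (L * (K ^ 2 * E)) + 2 * α⁻¹ * E +
      32 * (1 + (μ + ν) * K ^ 2) * E + K ^ 4 * M / (16 * α) + 16 * m * (K ^ 2 * E)) := by
    linarith
  calc H = m * H / m := by field_simp
    _ ≤ 4 * (65 * α * (L * (K ^ 2 * E)) + 2 * α⁻¹ * E +
      32 * (1 + (μ + ν) * K ^ 2) * E + K ^ 4 * M / (16 * α) + 16 * m * (K ^ 2 * E)) / m := by gcongr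
    _ = _ := by ring

theorem exists_integral_gradSq_sq_le : ∃ C : ℝ, 0 < C ∧ ∀ (f : ℝ × ℝ → ℝ), ContDiff ℝ ∞ f →
    Integrable (fun x => gradSq f x) → Integrable (fun x => hessSq f x) →
    Integrable (fun x => gradSq f x ^ 2) ∧
      ∫ x, gradSq f x ^ 2 ≤ C * (∫ x, gradSq f x) * ∫ x, hessSq f x := by
  obtain ⟨C, hC, h⟩ := exists_integral_cutoff_gradSq_sq_le
  obtain ⟨c, hc0, hc⟩ := exists_pd_cutoff_sq_le
  refine ⟨C, hC, fun f hf hg hh => ?_⟩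
  have hA : 0 ≤ ∫ x, gradSq f x := integral_nonneg fun x => gradSq_nonneg f x
  refine integrable_of_integral_cutoff_le (hf.gradSq.pow 2).continuous (fun x => sq_nonneg _) 7
    (B := fun R => C * (∫ x, gradSq f x) * ((∫ x, hessSq f x) + c / R ^ 2 * ∫ x, gradSq f x))
    ?_ fun R hR => ?_
  · have := (((tendsto_const_div_sq_atTop c).mul_const (∫ x, gradSq f x)).const_add
      (∫ x, hessSq f x)).const_mul (C * ∫ x, gradSq f x)
    simpa using this
  · have hR0 : 0 < R := by linarith
    have e : (√c / R) ^ 2 = c / R ^ 2 := by rw [div_pow, sq_sqrt hc0.le]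
    have h1 := h f hf hg R (√c) hR0 (fun x => by rw [e]; exact hc R hR0 x)
    rw [e] at h1
    refine h1.trans ?_
    have h2 := integral_cutoff_pow_mul_le hR0 3 hf.hessSq (hessSq_nonneg f) hh
    exact mul_le_mul_of_nonneg_left (by linarith) (by positivity)

theorem lap_sq_le (f : ℝ × ℝ → ℝ) (x : ℝ × ℝ) : lap f x ^ 2 ≤ 2 * hessSq f x := by
  unfold lap hessSq gradSq
  nlinarith [sq_nonneg (pd (1, 0) (pd (1, 0) f) x - pd (0, 1) (pd (0, 1) f) x),
    sq_nonneg (pd (0, 1) (pd (1, 0) f) x), sq_nonneg (pd (1, 0) (pd (0, 1) f) x)]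

theorem integrable_lap_sq {f : ℝ × ℝ → ℝ} (hf : ContDiff ℝ ∞ f)
    (hh : Integrable (fun x => hessSq f x)) : Integrable (fun x => lap f x ^ 2) := by
  refine (hh.const_mul 2).mono' (hf.lap.pow 2).continuous.aestronglyMeasurable
    (.of_forall fun x => ?_)
  rw [norm_of_nonneg (sq_nonneg _)]
  exact lap_sq_le f x

theorem integral_hessSq_le {f : ℝ × ℝ → ℝ} (hf : ContDiff ℝ ∞ f)
    (hg : Integrable (fun x => gradSq f x)) (hl : Integrable (fun x => lap f x ^ 2)) :
    ∫ x, hessSq f x ≤ 2 * ∫ x, lap f x ^ 2 := by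
  obtain ⟨c, hc0, hc⟩ := exists_pd_cutoff_sq_le
  refine (integrable_of_integral_cutoff_le hf.hessSq.continuous (hessSq_nonneg f) 3
    (B := fun R => 2 * (∫ x, lap f x ^ 2) + 32 * (c / R ^ 2 * ∫ x, gradSq f x))
    ?_ fun R hR => ?_).2
  · have := ((((tendsto_const_div_sq_atTop c).mul_const (∫ x, gradSq f x)).const_mul 32).const_add
      (2 * ∫ x, lap f x ^ 2))
    simpa using this
  · have hR0 : 0 < R := by linarith
    have h1 := integral_cutoff_hessSq_le hR0 (hc R hR0) hf hg
    have h2 := integral_cutoff_pow_mul_le hR0 3 (hf.lap.pow 2) (fun x => sq_nonneg _) hl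
    simp only [Nat.succ_eq_add_one, Nat.reduceAdd] at h2 ⊢
    linarith

/-- Interpolation of the Dirichlet energy between `f` and its Laplacian. -/
theorem sq_integral_gradSq_le {f : ℝ × ℝ → ℝ} (hf : ContDiff ℝ ∞ f)
    (h2 : Integrable (fun x => f x ^ 2)) (hl : Integrable (fun x => lap f x ^ 2)) :
    (∫ x, gradSq f x) ^ 2 ≤ 4 * (∫ x, f x ^ 2) * ∫ x, lap f x ^ 2 := by
  obtain ⟨c, hc0, hc⟩ := exists_pd_cutoff_sq_le
  obtain ⟨iW, hW⟩ := sq_integral_mul_le hf.continuous.abs hf.lap.continuous.abs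
    (by simpa only [sq_abs] using h2) (by simpa only [sq_abs] using hl)
  simp only [sq_abs] at hW
  have d1 := hf.pd (1, 0)
  have d2 := hf.pd (0, 1)
  have hA : ∫ x, gradSq f x ≤ 2 * ∫ x, |f x| * |lap f x| := by
    refine (integrable_of_integral_cutoff_le hf.gradSq.continuous (gradSq_nonneg f) 1
      (B := fun R => 2 * (∫ x, |f x| * |lap f x|) + 4 * (c / R ^ 2) * ∫ x, f x ^ 2)
      ?_ fun R hR => ?_).2
    · have := ((((tendsto_const_div_sq_atTop c).const_mul 4).mul_const (∫ x, f x ^ 2)).const_add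
        (2 * ∫ x, |f x| * |lap f x|))
      simpa using this
    have hR0 : 0 < R := by linarith
    obtain ⟨hi, h0⟩ := integral_cutoff_mul_div_eq_zero hR0 1 (hf.mul d1) (hf.mul d2)
    have hmono := integral_mono (integrable_cutoff_pow_mul hR0 1 hf.gradSq)
      (((hi.const_mul 2).add (iW.const_mul 2)).add (h2.const_mul (4 * (c / R ^ 2)))) (fun x => by
        simp only [Pi.add_apply]
        rw [pd_mul hf d1, pd_mul hf d2]
        have hcx := hc R hR0 x
        have hz0 := cutoff_nonneg R x
        have hz1 := cutoff_le_one R x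
        have hfl : -(f x * lap f x) ≤ |f x| * |lap f x| := by
          rw [← abs_mul]
          exact neg_le_abs _
        have hfn : 0 ≤ |f x| * |lap f x| := by positivity
        unfold lap at hfl hfn ⊢
        unfold gradSq
        set L := |f x| * |pd (1, 0) (pd (1, 0) f) x + pd (0, 1) (pd (0, 1) f) x|
        set z := cutoff R x
        have e1 : z ^ 2 * -(f x * (pd (1, 0) (pd (1, 0) f) x + pd (0, 1) (pd (0, 1) f) x)) ≤
            1 * L := by
          calc _ ≤ z ^ 2 * L := by gcongr
            _ ≤ 1 * L := by gcongr; exact pow_le_one₀ hz0 hz1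
        have e2 : f x ^ 2 * (pd (1, 0) (cutoff R) x ^ 2 + pd (0, 1) (cutoff R) x ^ 2) ≤
            f x ^ 2 * (c / R ^ 2) := by gcongr
        have e3 := sq_nonneg (z * pd (1, 0) f x + 2 * (f x * pd (1, 0) (cutoff R) x))
        have e4 := sq_nonneg (z * pd (0, 1) f x + 2 * (f x * pd (0, 1) (cutoff R) x))
        simp only [Nat.reduceAdd, Nat.cast_one, pow_one]
        linarith)
    rw [integral_add' ((hi.const_mul 2).add (iW.const_mul 2)) (h2.const_mul _),
      integral_add' (hi.const_mul 2) (iW.const_mul 2), integral_const_mul, integral_const_mul,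
      integral_const_mul, h0] at hmono
    simp only [Nat.succ_eq_add_one]
    linarith
  have hA0 : 0 ≤ ∫ x, gradSq f x := integral_nonneg fun x => gradSq_nonneg f x
  calc (∫ x, gradSq f x) ^ 2 ≤ (2 * ∫ x, |f x| * |lap f x|) ^ 2 := by gcongr
    _ = 4 * (∫ x, |f x| * |lap f x|) ^ 2 := by ring
    _ ≤ 4 * ((∫ x, f x ^ 2) * ∫ x, lap f x ^ 2) := by gcongr
    _ = _ := by ring

theorem eq_zero_of_integral_eq_zero {g : ℝ × ℝ → ℝ} (hg : Continuous g) (h0 : ∀ x, 0 ≤ g x)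
    (hi : Integrable g) (h : ∫ x, g x = 0) (x : ℝ × ℝ) : g x = 0 := by
  have h1 := (integral_eq_zero_iff_of_nonneg h0 hi).1 h
  exact congrFun ((hg.ae_eq_iff_eq volume continuous_const).1 h1) x

theorem eq_of_gradSq_eq_zero {f : ℝ × ℝ → ℝ} (hf : ContDiff ℝ ∞ f) (h : ∀ x, gradSq f x = 0)
    (x y : ℝ × ℝ) : f x = f y := by
  refine is_const_of_fderiv_eq_zero (𝕜 := ℝ) (hf.differentiable (by simp)) (fun z => ?_) x y
  have h1 := norm_fderiv_sq_le f z
  have h2 : pd (1, 0) f z ^ 2 + pd (0, 1) f z ^ 2 = 0 := h z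
  rw [h2, mul_zero] at h1
  exact norm_eq_zero.1 (pow_eq_zero_iff (two_ne_zero)|>.1 (le_antisymm h1 (sq_nonneg _)))

theorem eq_zero_of_integrable_of_const {g : ℝ × ℝ → ℝ} (hi : Integrable g)
    (h : ∀ x y, g x = g y) (x : ℝ × ℝ) : g x = 0 := by
  have h1 : Integrable (fun _ : ℝ × ℝ => g x) := by
    refine hi.congr (.of_forall fun y => h y x)
  rcases integrable_const_iff.1 h1 with h2 | h2
  · exact h2
  · exact absurd h2.measure_univ_lt_top (by simp)

theorem eq_of_integral_hessSq_eq_zero {f : ℝ × ℝ → ℝ} (hf : ContDiff ℝ ∞ f)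
    (hg : Integrable (fun x => gradSq f x)) (hh : Integrable (fun x => hessSq f x))
    (h : ∫ x, hessSq f x = 0) (x y : ℝ × ℝ) : f x = f y := by
  have h1 := eq_zero_of_integral_eq_zero hf.hessSq.continuous (hessSq_nonneg f) hh h
  have h2 : ∀ x, gradSq (pd (1, 0) f) x = 0 ∧ gradSq (pd (0, 1) f) x = 0 := fun x =>
    (add_eq_zero_iff_of_nonneg (gradSq_nonneg _ _) (gradSq_nonneg _ _)).1 (h1 x)
  obtain ⟨i1, i2⟩ := integrable_pd_sq hf hg
  have k1 := eq_zero_of_integrable_of_const i1 fun x y => by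
    rw [eq_of_gradSq_eq_zero (hf.pd (1, 0)) (fun x => (h2 x).1) x y]
  have k2 := eq_zero_of_integrable_of_const i2 fun x y => by
    rw [eq_of_gradSq_eq_zero (hf.pd (0, 1)) (fun x => (h2 x).2) x y]
  exact eq_of_gradSq_eq_zero hf (fun x => by rw [gradSq, k1, k2, add_zero]) x y

/-- The Ladyzhenskaya inequality for the gradient of a planar vector field. -/
theorem exists_integral_gradSq_add_sq_le : ∃ C : ℝ, 0 < C ∧ ∀ (f g : ℝ × ℝ → ℝ),
    ContDiff ℝ ∞ f → ContDiff ℝ ∞ g →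
    Integrable (fun x => gradSq f x) → Integrable (fun x => gradSq g x) →
    Integrable (fun x => hessSq f x) → Integrable (fun x => hessSq g x) →
    Integrable (fun x => (gradSq f x + gradSq g x) ^ 2) ∧
      ∫ x, (gradSq f x + gradSq g x) ^ 2 ≤
        C * (∫ x, (gradSq f x + gradSq g x)) * ∫ x, (hessSq f x + hessSq g x) := by
  obtain ⟨C, hC, h⟩ := exists_integral_gradSq_sq_le
  refine ⟨2 * C, by positivity, fun f g hf hg af ag yf yg => ?_⟩
  obtain ⟨i1, l1⟩ := h f hf af yf
  obtain ⟨i2, l2⟩ := h g hg ag yg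
  have hpt : ∀ x, (gradSq f x + gradSq g x) ^ 2 ≤ 2 * (gradSq f x ^ 2 + gradSq g x ^ 2) :=
    fun x => by nlinarith [sq_nonneg (gradSq f x - gradSq g x)]
  have hi : Integrable (fun x => (gradSq f x + gradSq g x) ^ 2) := by
    refine ((i1.add i2).const_mul 2).mono'
      ((hf.gradSq.add hg.gradSq).pow 2).continuous.aestronglyMeasurable (.of_forall fun x => ?_)
    rw [norm_of_nonneg (sq_nonneg _)]
    exact hpt x
  refine ⟨hi, ?_⟩
  have h1 : ∫ x, (gradSq f x + gradSq g x) ^ 2 ≤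
      2 * ((∫ x, gradSq f x ^ 2) + ∫ x, gradSq g x ^ 2) := by
    rw [← integral_add i1 i2, ← integral_const_mul]
    exact integral_mono hi ((i1.add i2).const_mul 2) hpt
  rw [integral_add af ag, integral_add yf yg]
  have a1 : 0 ≤ ∫ x, gradSq f x := integral_nonneg fun x => gradSq_nonneg f x
  have a2 : 0 ≤ ∫ x, gradSq g x := integral_nonneg fun x => gradSq_nonneg g x
  have y1 : 0 ≤ ∫ x, hessSq f x := integral_nonneg fun x => hessSq_nonneg f x
  have y2 : 0 ≤ ∫ x, hessSq g x := integral_nonneg fun x => hessSq_nonneg g x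
  have p1 := mul_nonneg hC.le (mul_nonneg a1 y2)
  have p2 := mul_nonneg hC.le (mul_nonneg a2 y1)
  linarith

/-- For a solenoidal planar field the Hessian is controlled by the gradient of the curl. -/
theorem integral_hessSq_add_le {f g : ℝ × ℝ → ℝ} (hf : ContDiff ℝ ∞ f) (hg : ContDiff ℝ ∞ g)
    (hd : ∀ x, pd (1, 0) f x + pd (0, 1) g x = 0)
    (af : Integrable (fun x => gradSq f x)) (ag : Integrable (fun x => gradSq g x))
    (yf : Integrable (fun x => hessSq f x)) (yg : Integrable (fun x => hessSq g x)) :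
    Integrable (fun x => gradSq (curl f g) x) ∧
      ∫ x, (hessSq f x + hessSq g x) ≤ 2 * ∫ x, gradSq (curl f g) x := by
  have l1 := integrable_lap_sq hf yf
  have l2 := integrable_lap_sq hg yg
  have h1 := integral_hessSq_le hf af l1
  have h2 := integral_hessSq_le hg ag l2
  simp only [gradSq_curl hf hg hd]
  refine ⟨l1.add l2, ?_⟩
  rw [integral_add yf yg, integral_add l1 l2]
  linarith

/-- Nash's inequality iterated once: the Dirichlet energy is controlled by the mass and the
Hessian. -/
theorem exists_cube_integral_gradSq_le : ∃ C : ℝ, 0 < C ∧ ∀ (f : ℝ × ℝ → ℝ), ContDiff ℝ ∞ f →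
    Integrable (fun x => |f x|) → Integrable (fun x => gradSq f x) →
    Integrable (fun x => hessSq f x) →
    (∫ x, gradSq f x) ^ 3 ≤ C * (∫ x, |f x|) ^ 2 * (∫ x, hessSq f x) ^ 2 := by
  obtain ⟨C, hC, h⟩ := exists_nash
  refine ⟨64 * C, by positivity, fun f hf n a y => ?_⟩
  obtain ⟨i2, hN⟩ := h f hf n a
  have il := integrable_lap_sq hf y
  have h1 := sq_integral_gradSq_le hf i2 il
  have h2 : ∫ x, lap f x ^ 2 ≤ 2 * ∫ x, hessSq f x := by
    rw [← integral_const_mul]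
    exact integral_mono il (y.const_mul 2) (lap_sq_le f)
  have a0 : 0 ≤ ∫ x, gradSq f x := integral_nonneg fun x => gradSq_nonneg f x
  have m0 : 0 ≤ ∫ x, f x ^ 2 := integral_nonneg fun x => sq_nonneg _
  have y0 : 0 ≤ ∫ x, hessSq f x := integral_nonneg fun x => hessSq_nonneg f x
  set A := ∫ x, gradSq f x
  set m := ∫ x, f x ^ 2
  set Y := ∫ x, hessSq f x
  set N := ∫ x, |f x|
  rcases a0.eq_or_lt with h0 | h0
  · rw [← h0, zero_pow three_ne_zero]
    positivity
  have h3 : A ^ 2 ≤ 8 * m * Y := by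
    have := mul_le_mul_of_nonneg_left h2 m0
    linarith
  have h4 : (A ^ 2) ^ 2 ≤ (8 * m * Y) ^ 2 := by gcongr
  have h5 : m ^ 2 * Y ^ 2 ≤ C * N ^ 2 * A * Y ^ 2 := by gcongr
  refine le_of_mul_le_mul_right ?_ h0
  linarith

theorem exists_cube_integral_gradSq_add_le : ∃ C : ℝ, 0 < C ∧ ∀ (f g : ℝ × ℝ → ℝ),
    ContDiff ℝ ∞ f → ContDiff ℝ ∞ g →
    Integrable (fun x => |f x|) → Integrable (fun x => |g x|) →
    Integrable (fun x => gradSq f x) → Integrable (fun x => gradSq g x) →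
    Integrable (fun x => hessSq f x) → Integrable (fun x => hessSq g x) →
    ∀ N : ℝ, ∫ x, |f x| ≤ N → ∫ x, |g x| ≤ N →
    (∫ x, (gradSq f x + gradSq g x)) ^ 3 ≤ C * N ^ 2 * (∫ x, (hessSq f x + hessSq g x)) ^ 2 := by
  obtain ⟨C, hC, h⟩ := exists_cube_integral_gradSq_le
  refine ⟨4 * C, by positivity, fun f g hf hg nf ng af ag yf yg N hNf hNg => ?_⟩
  have h1 := h f hf nf af yf
  have h2 := h g hg ng ag yg
  rw [integral_add af ag, integral_add yf yg]
  have n1 : 0 ≤ ∫ x, |f x| := integral_nonneg fun x => abs_nonneg _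
  have n2 : 0 ≤ ∫ x, |g x| := integral_nonneg fun x => abs_nonneg _
  have a1 : 0 ≤ ∫ x, gradSq f x := integral_nonneg fun x => gradSq_nonneg f x
  have a2 : 0 ≤ ∫ x, gradSq g x := integral_nonneg fun x => gradSq_nonneg g x
  have y1 : 0 ≤ ∫ x, hessSq f x := integral_nonneg fun x => hessSq_nonneg f x
  have y2 : 0 ≤ ∫ x, hessSq g x := integral_nonneg fun x => hessSq_nonneg g x
  set a := ∫ x, gradSq f x
  set a' := ∫ x, gradSq g x
  set y := ∫ x, hessSq f x
  set y' := ∫ x, hessSq g x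
  have h3 : a ^ 3 ≤ C * N ^ 2 * y ^ 2 := h1.trans (by gcongr)
  have h4 : a' ^ 3 ≤ C * N ^ 2 * y' ^ 2 := h2.trans (by gcongr)
  have h5 : (a + a') ^ 3 ≤ 4 * (a ^ 3 + a' ^ 3) := by
    nlinarith [mul_nonneg (add_nonneg a1 a2) (sq_nonneg (a - a'))]
  have h6 : 0 ≤ C * N ^ 2 * (y * y') := by positivity
  linarith

namespace IsVorticityMHD

variable {μ ν : ℝ} {u₁ u₂ b₁ b₂ : ℝ × ℝ → ℝ}

theorem integrable_hessSq (h : IsVorticityMHD μ ν u₁ u₂ b₁ b₂) :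
    (Integrable (fun x => hessSq u₁ x) ∧ Integrable (fun x => hessSq u₂ x)) ∧
      Integrable (fun x => hessSq b₁ x) ∧ Integrable (fun x => hessSq b₂ x) := by
  have key : ∀ {f : ℝ × ℝ → ℝ}, ContDiff ℝ ∞ f → (∀ x, hessSq f x ≤ hessDensity u₁ u₂ b₁ b₂ x) →
      Integrable (fun x => hessSq f x) := fun hf hle => by
    refine h.integrable_hessDensity.mono' hf.hessSq.continuous.aestronglyMeasurable
      (.of_forall fun x => ?_)
    rw [norm_of_nonneg (hessSq_nonneg _ _)]
    exact hle x
  have n := fun x => hessSq_nonneg u₁ x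
  have n' := fun x => hessSq_nonneg u₂ x
  have m := fun x => hessSq_nonneg b₁ x
  have m' := fun x => hessSq_nonneg b₂ x
  refine ⟨⟨key h.smooth_u₁ ?_, key h.smooth_u₂ ?_⟩, key h.smooth_b₁ ?_, key h.smooth_b₂ ?_⟩ <;>
  · intro x
    unfold hessDensity
    linarith [n x, n' x, m x, m' x]

/-- The energy density is square integrable. -/
theorem integrable_energyDensity_sq (h : IsVorticityMHD μ ν u₁ u₂ b₁ b₂) :
    Integrable (fun x => energyDensity u₁ u₂ b₁ b₂ x ^ 2) := by
  obtain ⟨C, -, hL⟩ := exists_integral_gradSq_add_sq_le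
  obtain ⟨⟨y1, y2⟩, y3, y4⟩ := h.integrable_hessSq
  have i1 := (hL u₁ u₂ h.smooth_u₁ h.smooth_u₂ h.energy_u₁ h.energy_u₂ y1 y2).1
  have i2 := (hL b₁ b₂ h.smooth_b₁ h.smooth_b₂ h.energy_b₁ h.energy_b₂ y3 y4).1
  refine ((i1.add i2).const_mul 2).mono'
    ((h.smooth_u₁.energyDensity h.smooth_u₂ h.smooth_b₁ h.smooth_b₂).pow
      2).continuous.aestronglyMeasurable (.of_forall fun x => ?_)
  rw [norm_of_nonneg (sq_nonneg _)]
  simp only [Pi.add_apply, energyDensity]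
  nlinarith [sq_nonneg (gradSq u₁ x + gradSq u₂ x - (gradSq b₁ x + gradSq b₂ x))]

theorem integrable_stretch_sq (h : IsVorticityMHD μ ν u₁ u₂ b₁ b₂) :
    Integrable (fun x => |stretch u₁ u₂ b₁ b₂ x| ^ 2) := by
  refine h.integrable_energyDensity_sq.mono' (((h.smooth_u₁.stretch h.smooth_u₂ h.smooth_b₁
    h.smooth_b₂).continuous.abs).pow 2).aestronglyMeasurable (.of_forall fun x => ?_)
  rw [norm_of_nonneg (sq_nonneg _), sq_abs]
  have := stretch_sq_le u₁ u₂ b₁ b₂ x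
  unfold energyDensity
  nlinarith [sq_nonneg (gradSq u₁ x + gradSq u₂ x - (gradSq b₁ x + gradSq b₂ x))]

theorem integrable_current_sq (h : IsVorticityMHD μ ν u₁ u₂ b₁ b₂) :
    Integrable (fun x => |curl b₁ b₂ x| ^ 2) := by
  refine ((h.energy_b₁.add h.energy_b₂).const_mul 2).mono'
    (((h.smooth_b₁.curl h.smooth_b₂).continuous.abs).pow 2).aestronglyMeasurable
    (.of_forall fun x => ?_)
  rw [norm_of_nonneg (sq_nonneg _), sq_abs]
  exact curl_sq_le b₁ b₂ x

/-- The global energy inequality for the vorticity and the current. -/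
theorem integral_dissipation_le (h : IsVorticityMHD μ ν u₁ u₂ b₁ b₂) :
    ∫ x, (μ * gradSq (curl u₁ u₂) x + ν * gradSq (curl b₁ b₂) x) ≤
      2 * ∫ x, |stretch u₁ u₂ b₁ b₂ x| * |curl b₁ b₂ x| := by
  obtain ⟨K, M, hK, hM0, hKM⟩ := h.exists_cutoff_bounds
  have s1 := h.smooth_u₁
  have s2 := h.smooth_u₂
  have s3 := h.smooth_b₁
  have s4 := h.smooth_b₂
  have hμ := h.μ_pos
  have hν := h.ν_pos
  have hT : ContDiff ℝ ∞ (stretch u₁ u₂ b₁ b₂) := s1.stretch s2 s3 s4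
  have hw : ContDiff ℝ ∞ (curl u₁ u₂) := s1.curl s2
  have hj : ContDiff ℝ ∞ (curl b₁ b₂) := s3.curl s4
  have iG2 := h.integrable_energyDensity_sq
  have iS := (sq_integral_mul_le hT.continuous.abs hj.continuous.abs h.integrable_stretch_sq
    h.integrable_current_sq).1
  set S := ∫ x, |stretch u₁ u₂ b₁ b₂ x| * |curl b₁ b₂ x|
  set E := ∫ x, energyDensity u₁ u₂ b₁ b₂ x
  set Q := ∫ x, energyDensity u₁ u₂ b₁ b₂ x ^ 2
  have hE0 : 0 ≤ E := integral_nonneg fun x => energyDensity_nonneg _ _ _ _ x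
  have hQ0 : 0 ≤ Q := integral_nonneg fun x => sq_nonneg _
  have main : ∀ δ, 0 < δ →
      ∫ x, (μ * gradSq (curl u₁ u₂) x + ν * gradSq (curl b₁ b₂) x) ≤
        2 * S + 64 * δ * Q + 32 * δ * E := by
    intro δ hδ
    refine (integrable_of_integral_cutoff_le (by fun_prop)
      (fun x => add_nonneg (mul_nonneg hμ.le (gradSq_nonneg _ _))
        (mul_nonneg hν.le (gradSq_nonneg _ _))) 3
      (B := fun R => 2 * S + 64 * δ * Q + 32 * δ * E +
        (32 * (μ + ν) * E * (K ^ 2 / R ^ 2) + K ^ 4 * M / (16 * δ * δ ^ 2) / R))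
      ?_ fun R hR => ?_).2
    · have t1 := (tendsto_const_div_sq_atTop (K ^ 2)).const_mul (32 * (μ + ν) * E)
      have t2 : Tendsto (fun R : ℝ => K ^ 4 * M / (16 * δ * δ ^ 2) / R) atTop (nhds 0) :=
        tendsto_id.const_div_atTop _
      simpa using (t1.add t2).const_add (2 * S + 64 * δ * Q + 32 * δ * E)
    · have hR0 : 0 < R := by linarith
      obtain ⟨hc, hM⟩ := hKM R hR
      have a1 := h.integral_cutoff_dissipation_le hR0 hK hc hδ hδ hM
      have a2 : ∫ x, cutoff R x ^ 8 * energyDensity u₁ u₂ b₁ b₂ x ^ 2 ≤ Q :=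
        integral_cutoff_pow_mul_le hR0 7 ((s1.energyDensity s2 s3 s4).pow 2)
          (fun x => sq_nonneg _) iG2
      have a3 : ∫ x, cutoff R x ^ 4 * (stretch u₁ u₂ b₁ b₂ x * curl b₁ b₂ x) ≤ S := by
        refine integral_mono (integrable_cutoff_pow_mul hR0 3 (hT.mul hj)) iS fun x => ?_
        have z0 := cutoff_nonneg R x
        have z1 := pow_le_one₀ (n := 4) z0 (cutoff_le_one R x)
        simp only
        rw [← abs_mul]
        calc _ ≤ cutoff R x ^ 4 * |stretch u₁ u₂ b₁ b₂ x * curl b₁ b₂ x| := by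
              gcongr
              exact le_abs_self _
          _ ≤ 1 * |stretch u₁ u₂ b₁ b₂ x * curl b₁ b₂ x| := by gcongr
          _ = _ := one_mul _
      have a4 := mul_le_mul_of_nonneg_left a2 (by positivity : 0 ≤ 64 * δ)
      simp only [Nat.succ_eq_add_one, Nat.reduceAdd]
      rw [div_pow] at a1
      linarith
  refine le_of_forall_pos_le_add fun ε hε => ?_
  have hd : 0 < 64 * Q + 32 * E + 1 := by positivity
  have h1 := main (ε / (64 * Q + 32 * E + 1)) (by positivity)
  have h2 : ε / (64 * Q + 32 * E + 1) * (64 * Q + 32 * E) ≤ ε := by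
    rw [div_mul_eq_mul_div, div_le_iff₀ hd]
    nlinarith
  linarith

end IsVorticityMHD

/-- The closed inequality for the Hessian energies of a solution. -/
theorem exists_pow_four_hessSq_le : ∃ C : ℝ, 0 < C ∧
    ∀ (μ ν : ℝ) (u₁ u₂ b₁ b₂ : ℝ × ℝ → ℝ), IsVorticityMHD μ ν u₁ u₂ b₁ b₂ →
    Integrable (fun x => |b₁ x|) → Integrable (fun x => |b₂ x|) →
    ∀ N : ℝ, ∫ x, |b₁ x| ≤ N → ∫ x, |b₂ x| ≤ N →
    (μ * (∫ x, (hessSq u₁ x + hessSq u₂ x)) + ν * ∫ x, (hessSq b₁ x + hessSq b₂ x)) ^ 4 ≤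
      C * N ^ 2 * (∫ x, (gradSq u₁ x + gradSq u₂ x)) *
        ((∫ x, (hessSq u₁ x + hessSq u₂ x)) * (∫ x, (hessSq b₁ x + hessSq b₂ x)) ^ 3) := by
  obtain ⟨C₁, hC₁, hL⟩ := exists_integral_gradSq_add_sq_le
  obtain ⟨C₂, hC₂, hN⟩ := exists_cube_integral_gradSq_add_le
  refine ⟨16384 * C₁ ^ 2 * C₂, by positivity, fun μ ν u₁ u₂ b₁ b₂ h n₁ n₂ N hN₁ hN₂ => ?_⟩
  obtain ⟨⟨y1, y2⟩, y3, y4⟩ := h.integrable_hessSq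
  have s1 := h.smooth_u₁
  have s2 := h.smooth_u₂
  have s3 := h.smooth_b₁
  have s4 := h.smooth_b₂
  have hμ := h.μ_pos
  have hν := h.ν_pos
  obtain ⟨iu, qu⟩ := hL u₁ u₂ s1 s2 h.energy_u₁ h.energy_u₂ y1 y2
  obtain ⟨ib, qb⟩ := hL b₁ b₂ s3 s4 h.energy_b₁ h.energy_b₂ y3 y4
  have hA := hN b₁ b₂ s3 s4 n₁ n₂ h.energy_b₁ h.energy_b₂ y3 y4 N hN₁ hN₂
  obtain ⟨iw, hX⟩ := integral_hessSq_add_le s1 s2 h.div_u h.energy_u₁ h.energy_u₂ y1 y2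
  obtain ⟨ij, hY⟩ := integral_hessSq_add_le s3 s4 h.div_b h.energy_b₁ h.energy_b₂ y3 y4
  have hP := h.integral_dissipation_le
  rw [integral_add (iw.const_mul μ) (ij.const_mul ν), integral_const_mul, integral_const_mul] at hP
  obtain ⟨iS, hS⟩ := sq_integral_mul_le (s1.stretch s2 s3 s4).continuous.abs
    (s3.curl s4).continuous.abs h.integrable_stretch_sq h.integrable_current_sq
  obtain ⟨iW, hW⟩ := sq_integral_mul_le (s1.gradSq.add s2.gradSq).continuous
    (s3.gradSq.add s4.gradSq).continuous iu ib
  have hT : ∫ x, |stretch u₁ u₂ b₁ b₂ x| ^ 2 ≤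
      4 * ∫ x, (gradSq u₁ x + gradSq u₂ x) * (gradSq b₁ x + gradSq b₂ x) := by
    rw [← integral_const_mul]
    refine integral_mono h.integrable_stretch_sq (iW.const_mul 4) fun x => ?_
    simp only [sq_abs]
    exact stretch_sq_le u₁ u₂ b₁ b₂ x
  have hj : ∫ x, |curl b₁ b₂ x| ^ 2 ≤ 2 * ∫ x, (gradSq b₁ x + gradSq b₂ x) := by
    rw [← integral_const_mul]
    refine integral_mono h.integrable_current_sq
      ((h.energy_b₁.add h.energy_b₂).const_mul 2) fun x => ?_
    simp only [sq_abs]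
    exact curl_sq_le b₁ b₂ x
  have gn : ∀ f g x, 0 ≤ gradSq f x + gradSq g x := fun f g x =>
    add_nonneg (gradSq_nonneg f x) (gradSq_nonneg g x)
  have yn : ∀ f g x, 0 ≤ hessSq f x + hessSq g x := fun f g x =>
    add_nonneg (hessSq_nonneg f x) (hessSq_nonneg g x)
  have Au0 : 0 ≤ ∫ x, (gradSq u₁ x + gradSq u₂ x) := integral_nonneg (gn u₁ u₂)
  have Ab0 : 0 ≤ ∫ x, (gradSq b₁ x + gradSq b₂ x) := integral_nonneg (gn b₁ b₂)
  have X0 : 0 ≤ ∫ x, (hessSq u₁ x + hessSq u₂ x) := integral_nonneg (yn u₁ u₂)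
  have Y0 : 0 ≤ ∫ x, (hessSq b₁ x + hessSq b₂ x) := integral_nonneg (yn b₁ b₂)
  have W0 : 0 ≤ ∫ x, (gradSq u₁ x + gradSq u₂ x) * (gradSq b₁ x + gradSq b₂ x) :=
    integral_nonneg fun x => mul_nonneg (gn u₁ u₂ x) (gn b₁ b₂ x)
  have Qb0 : 0 ≤ ∫ x, (gradSq b₁ x + gradSq b₂ x) ^ 2 := integral_nonneg fun x => sq_nonneg _
  have j0 : 0 ≤ ∫ x, |curl b₁ b₂ x| ^ 2 := integral_nonneg fun x => sq_nonneg _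
  set Au := ∫ x, (gradSq u₁ x + gradSq u₂ x)
  set Ab := ∫ x, (gradSq b₁ x + gradSq b₂ x)
  set X := ∫ x, (hessSq u₁ x + hessSq u₂ x)
  set Y := ∫ x, (hessSq b₁ x + hessSq b₂ x)
  set W := ∫ x, (gradSq u₁ x + gradSq u₂ x) * (gradSq b₁ x + gradSq b₂ x)
  set S := ∫ x, |stretch u₁ u₂ b₁ b₂ x| * |curl b₁ b₂ x|
  have e1 : μ * X + ν * Y ≤ 4 * S := by
    have := mul_le_mul_of_nonneg_left hX hμ.le
    have := mul_le_mul_of_nonneg_left hY hν.le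
    linarith
  have e2 : S ^ 2 ≤ 4 * W * (2 * Ab) := hS.trans (by gcongr)
  have e3 : W ^ 2 ≤ C₁ * Au * X * (C₁ * Ab * Y) := hW.trans (by gcongr)
  calc (μ * X + ν * Y) ^ 4 ≤ (4 * S) ^ 4 := by gcongr
    _ = 256 * (S ^ 2) ^ 2 := by ring
    _ ≤ 256 * (4 * W * (2 * Ab)) ^ 2 := by gcongr
    _ = 16384 * (Ab ^ 2 * W ^ 2) := by ring
    _ ≤ 16384 * (Ab ^ 2 * (C₁ * Au * X * (C₁ * Ab * Y))) := by gcongr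
    _ = 16384 * (C₁ ^ 2 * Au * X * Y * Ab ^ 3) := by ring
    _ ≤ 16384 * (C₁ ^ 2 * Au * X * Y * (C₂ * N ^ 2 * Y ^ 2)) := by gcongr
    _ = _ := by ring

theorem gradSq_fst_add_gradSq_snd_le {v : ℝ × ℝ → ℝ × ℝ} (hv : ContDiff ℝ ∞ v) (x : ℝ × ℝ) :
    gradSq (fun y => (v y).1) x + gradSq (fun y => (v y).2) x ≤ 4 * ‖fderiv ℝ v x‖ ^ 2 := by
  have hd : HasFDerivAt v (fderiv ℝ v x) x :=
    (hv.differentiable (by simp) x).hasFDerivAt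
  have key : ∀ w : ℝ × ℝ, ‖w‖ = 1 →
      pd w (fun y => (v y).1) x ^ 2 ≤ ‖fderiv ℝ v x‖ ^ 2 ∧
        pd w (fun y => (v y).2) x ^ 2 ≤ ‖fderiv ℝ v x‖ ^ 2 := by
    intro w hw
    have h1 : pd w (fun y => (v y).1) x = (fderiv ℝ v x w).1 := by
      rw [pd, hd.fst.fderiv]
      rfl
    have h2 : pd w (fun y => (v y).2) x = (fderiv ℝ v x w).2 := by
      rw [pd, hd.snd.fderiv]
      rfl
    have h3 : ‖fderiv ℝ v x w‖ ≤ ‖fderiv ℝ v x‖ := by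
      simpa [hw] using (fderiv ℝ v x).le_opNorm w
    rw [h1, h2]
    exact ⟨sq_le_sq' (neg_le_of_abs_le ((norm_fst_le _).trans h3))
        (le_of_abs_le ((norm_fst_le _).trans h3)),
      sq_le_sq' (neg_le_of_abs_le ((norm_snd_le _).trans h3))
        (le_of_abs_le ((norm_snd_le _).trans h3))⟩
  obtain ⟨a1, a2⟩ := key (1, 0) (by simp [Prod.norm_def])
  obtain ⟨a3, a4⟩ := key (0, 1) (by simp [Prod.norm_def])
  unfold gradSq
  linarith

/-- Absorption: a quartic bound with a small constant forces both energies to vanish. -/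
theorem eq_zero_of_pow_four_le {μ ν X Y c : ℝ} (hμ : 0 < μ) (hν : 0 < ν) (hX : 0 ≤ X)
    (hY : 0 ≤ Y) (hc : c ≤ 1 / 2 * (μ * ν ^ 3)) (h : (μ * X + ν * Y) ^ 4 ≤ c * (X * Y ^ 3)) :
    X = 0 ∧ Y = 0 := by
  have p1 : 0 ≤ μ * X := by positivity
  have p2 : 0 ≤ ν * Y := by positivity
  have h1 : c * (X * Y ^ 3) ≤ 1 / 2 * (μ * ν ^ 3) * (X * Y ^ 3) := by gcongr
  have h2 : (μ * X) * (ν * Y) ^ 3 ≤ (μ * X + ν * Y) * (μ * X + ν * Y) ^ 3 := by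
    gcongr <;> linarith
  have h3 : (μ * X + ν * Y) ^ 4 ≤ 0 := by linarith
  have h4 : μ * X + ν * Y = 0 :=
    pow_eq_zero_iff four_ne_zero |>.1 (le_antisymm h3 (by positivity))
  have h5 : μ * X = 0 := by linarith
  have h6 : ν * Y = 0 := by linarith
  exact ⟨(mul_eq_zero.1 h5).resolve_left (ne_of_gt hμ),
    (mul_eq_zero.1 h6).resolve_left (ne_of_gt hν)⟩

/-- Liouville theorem for 2D stationary MHD under finite Dirichlet energy and a
scale-invariant smallness condition on the magnetic field (Theorem 1.1). -/
theorem mhd_liouville_dirichlet :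
    ∃ Cstar : ℝ, 0 < Cstar ∧
      ∀ (μ ν : ℝ), 0 < μ → 0 < ν →
      ∀ (u b : ℝ × ℝ → ℝ × ℝ) (pr : ℝ × ℝ → ℝ),
      ContDiff ℝ (⊤ : ℕ∞) u → ContDiff ℝ (⊤ : ℕ∞) b → ContDiff ℝ (⊤ : ℕ∞) pr →
      isMHD μ ν u b pr →
      ∀ D0 : ℝ,
      MeasureTheory.Integrable (fun x => ‖fderiv ℝ u x‖ ^ 2 + ‖fderiv ℝ b x‖ ^ 2) →
      (∫ x, (‖fderiv ℝ u x‖ ^ 2 + ‖fderiv ℝ b x‖ ^ 2)) ≤ D0 →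
      MeasureTheory.Integrable (fun x => ‖b x‖) →
      (∫ x, ‖b x‖) * D0 ^ ((1:ℝ)/2)
          ≤ Cstar * min (μ * ν) (μ ^ ((1:ℝ)/2) * ν ^ ((3:ℝ)/2)) →
      (∀ x y, u x = u y) ∧ (∀ x, b x = 0) := by
  obtain ⟨C, hC, hmain⟩ := exists_pow_four_hessSq_le
  refine ⟨√(1 / (8 * C)), by positivity, ?_⟩
  intro μ ν hμ hν u b pr hu hb hp h D0 hi hD hN hsmall
  have gu := gradSq_fst_add_gradSq_snd_le hu
  have gb := gradSq_fst_add_gradSq_snd_le hb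
  have energy : ∀ f : ℝ × ℝ → ℝ, ContDiff ℝ ∞ f →
      (∀ x, gradSq f x ≤ 4 * (‖fderiv ℝ u x‖ ^ 2 + ‖fderiv ℝ b x‖ ^ 2)) →
      Integrable (fun x => gradSq f x) := fun f hf hle => by
    refine (hi.const_mul 4).mono' hf.gradSq.continuous.aestronglyMeasurable
      (.of_forall fun x => ?_)
    rw [norm_of_nonneg (gradSq_nonneg _ _)]
    exact hle x
  have nn := gradSq_nonneg
  have e₁ := energy (fun y => (u y).1) hu.fst fun x => by
    linarith [gu x, nn (fun y => (u y).2) x, sq_nonneg ‖fderiv ℝ b x‖]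
  have e₂ := energy (fun y => (u y).2) hu.snd fun x => by
    linarith [gu x, nn (fun y => (u y).1) x, sq_nonneg ‖fderiv ℝ b x‖]
  have e₃ := energy (fun y => (b y).1) hb.fst fun x => by
    linarith [gb x, nn (fun y => (b y).2) x, sq_nonneg ‖fderiv ℝ u x‖]
  have e₄ := energy (fun y => (b y).2) hb.snd fun x => by
    linarith [gb x, nn (fun y => (b y).1) x, sq_nonneg ‖fderiv ℝ u x‖]
  have hV := isVorticityMHD_of_isMHD hμ hν hu hb hp h e₁ e₂ e₃ e₄
  have n₁ : Integrable (fun x => |(b x).1|) :=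
    hN.mono' hb.fst.continuous.abs.aestronglyMeasurable (.of_forall fun x => by
      simpa using norm_fst_le (b x))
  have n₂ : Integrable (fun x => |(b x).2|) :=
    hN.mono' hb.snd.continuous.abs.aestronglyMeasurable (.of_forall fun x => by
      simpa using norm_snd_le (b x))
  have key := hmain μ ν _ _ _ _ hV n₁ n₂ (∫ x, ‖b x‖)
    (integral_mono n₁ hN fun x => norm_fst_le (b x))
    (integral_mono n₂ hN fun x => norm_snd_le (b x))
  have hD0 : 0 ≤ D0 := (integral_nonneg fun x => by positivity).trans hD
  have hN0 : 0 ≤ ∫ x, ‖b x‖ := integral_nonneg fun x => norm_nonneg _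
  have hAu : ∫ x, (gradSq (fun y => (u y).1) x + gradSq (fun y => (u y).2) x) ≤ 4 * D0 := by
    refine le_trans ?_ (mul_le_mul_of_nonneg_left hD (by norm_num))
    rw [← integral_const_mul]
    exact integral_mono (e₁.add e₂) (hi.const_mul 4) fun x => by
      simp only
      linarith [gu x, sq_nonneg ‖fderiv ℝ b x‖]
  have hsq : (∫ x, ‖b x‖) ^ 2 * D0 ≤ 1 / (8 * C) * (μ * ν ^ 3) := by
    have h1 : (∫ x, ‖b x‖) * D0 ^ ((1 : ℝ) / 2) ≤
        √(1 / (8 * C)) * (μ ^ ((1 : ℝ) / 2) * ν ^ ((3 : ℝ) / 2)) :=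
      hsmall.trans (mul_le_mul_of_nonneg_left (min_le_right _ _) (sqrt_nonneg _))
    have h2 := pow_le_pow_left₀ (by positivity) h1 2
    have r : ∀ y : ℝ, 0 ≤ y → (y ^ ((1 : ℝ) / 2)) ^ 2 = y := fun y hy => by
      rw [← rpow_natCast, ← rpow_mul hy]
      norm_num
    have r3 : (ν ^ ((3 : ℝ) / 2)) ^ 2 = ν ^ 3 := by
      rw [← rpow_natCast, ← rpow_mul hν.le, ← rpow_natCast]
      norm_num
    rwa [mul_pow, mul_pow, mul_pow, r D0 hD0, r μ hμ.le, r3, sq_sqrt (by positivity)] at h2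
  have yn : ∀ f g x, 0 ≤ hessSq f x + hessSq g x := fun f g x =>
    add_nonneg (hessSq_nonneg f x) (hessSq_nonneg g x)
  obtain ⟨⟨y₁, y₂⟩, y₃, y₄⟩ := hV.integrable_hessSq
  obtain ⟨hX, hY⟩ := eq_zero_of_pow_four_le hμ hν (integral_nonneg (yn _ _))
    (integral_nonneg (yn _ _)) (by
      calc _ ≤ C * (∫ x, ‖b x‖) ^ 2 * (4 * D0) :=
            mul_le_mul_of_nonneg_left hAu (by positivity)
        _ = 4 * C * ((∫ x, ‖b x‖) ^ 2 * D0) := by ring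
        _ ≤ 4 * C * (1 / (8 * C) * (μ * ν ^ 3)) :=
            mul_le_mul_of_nonneg_left hsq (by positivity)
        _ = _ := by field_simp; norm_num) key
  have split : ∀ {f g : ℝ × ℝ → ℝ}, Integrable (fun x => hessSq f x) →
      Integrable (fun x => hessSq g x) → ∫ x, (hessSq f x + hessSq g x) = 0 →
      ∫ x, hessSq f x = 0 ∧ ∫ x, hessSq g x = 0 := fun {f g} hf hg h0 => by
    rw [integral_add hf hg] at h0
    exact (add_eq_zero_iff_of_nonneg (integral_nonneg fun x => hessSq_nonneg f x)
      (integral_nonneg fun x => hessSq_nonneg g x)).1 h0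
  obtain ⟨x₁, x₂⟩ := split y₁ y₂ hX
  obtain ⟨x₃, x₄⟩ := split y₃ y₄ hY
  have c₃ := eq_of_integral_hessSq_eq_zero hb.fst e₃ y₃ x₃
  have c₄ := eq_of_integral_hessSq_eq_zero hb.snd e₄ y₄ x₄
  refine ⟨fun x y => Prod.ext (eq_of_integral_hessSq_eq_zero hu.fst e₁ y₁ x₁ x y)
    (eq_of_integral_hessSq_eq_zero hu.snd e₂ y₂ x₂ x y), fun x => Prod.ext ?_ ?_⟩
  · exact abs_eq_zero.1 (eq_zero_of_integrable_of_const n₁ (fun x y => by rw [c₃ x y]) x)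
  · exact abs_eq_zero.1 (eq_zero_of_integrable_of_const n₂ (fun x y => by rw [c₄ x y]) x)
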